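/- arXiv:2511.13140 — 2 statements merged into one kernel-verified Lean document; each statement's English description precedes it below -/
import Mathlib

section
/- For every h ≥ 6: if for every side assignment s' : {2,…,h−3} → {up, down} the caterpillar cubic Halin graph G(h−2,s') admits a star 5-edge coloring, then for every side assignment s : {2,…,h−1} → {up, down} the caterpillar cubic Halin graph G(h,s) admits a star 5-edge coloring. -/
/-- A star `k`-edge coloring of a simple graph `G`: a proper edge coloring with colors
`0, …, k-1` such that the edges of every path of length 4 and of every cycle of length 4
receive at least 3 distinct colors. -/
def IsStarEdgeColoring {V : Type*} (G : SimpleGraph V) (k : ℕ) (c : Sym2 V → ℕ) : Prop :=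
  (∀ e ∈ G.edgeSet, c e < k) ∧
  (∀ a b b' : V, G.Adj a b → G.Adj a b' → b ≠ b' → c s(a, b) ≠ c s(a, b')) ∧
  (∀ v0 v1 v2 v3 v4 : V, ([v0, v1, v2, v3, v4] : List V).Nodup →
    G.Adj v0 v1 → G.Adj v1 v2 → G.Adj v2 v3 → G.Adj v3 v4 →
    3 ≤ ({c s(v0, v1), c s(v1, v2), c s(v2, v3), c s(v3, v4)} : Finset ℕ).card) ∧
  (∀ v0 v1 v2 v3 : V, ([v0, v1, v2, v3] : List V).Nodup →
    G.Adj v0 v1 → G.Adj v1 v2 → G.Adj v2 v3 → G.Adj v3 v0 →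
    3 ≤ ({c s(v0, v1), c s(v1, v2), c s(v2, v3), c s(v3, v0)} : Finset ℕ).card)

/-- Vertices of the caterpillar cubic Halin graph `G(h, s)`: `Sum.inl i` is the spine
vertex `v_{i+1}` (for `i : Fin h`) and `Sum.inr j` is the leaf `u_j` (for `j : Fin (h+2)`). -/
abbrev CatVert (h : ℕ) := Fin h ⊕ Fin (h + 2)

/-- The indices of the leaves along the exterior cycle of `G(h, s)`: `u_0`, then the
leaves `u_i` (`2 ≤ i ≤ h - 1`) with `s i = false` (down) in increasing order, then
`u_h`, `u_{h+1}`, then the leaves with `s i = true` (up) in decreasing order, then `u_1`. -/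
def extCycle (h : ℕ) (s : ℕ → Bool) : List ℕ :=
  0 :: ((List.range' 2 (h - 2)).filter fun i => s i = false) ++ [h, h + 1] ++
    ((List.range' 2 (h - 2)).filter fun i => s i = true).reverse ++ [1]

/-- Base adjacency relation of `G(h, s)`: spine edges `v_i v_{i+1}`; tree edges
`v_1 u_0`, `v_1 u_1`, `v_h u_h`, `v_h u_{h+1}`, and `v_i u_i` for `2 ≤ i ≤ h - 1`;
and the exterior cycle through the leaves, whose consecutive pairs (including the
wrap-around pair) are exactly the pairs of `extCycle h s` zipped with its rotation. -/
def catRel (h : ℕ) (s : ℕ → Bool) : CatVert h → CatVert h → Prop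
  | Sum.inl i, Sum.inl i' => i'.val = i.val + 1
  | Sum.inl i, Sum.inr j =>
      (i.val = 0 ∧ (j.val = 0 ∨ j.val = 1)) ∨
      (i.val = h - 1 ∧ (j.val = h ∨ j.val = h + 1)) ∨
      (j.val = i.val + 1 ∧ 2 ≤ j.val ∧ j.val ≤ h - 1)
  | Sum.inr j, Sum.inr j' => (j.val, j'.val) ∈ (extCycle h s).zip ((extCycle h s).rotate 1)
  | _, _ => False

/-- The caterpillar cubic Halin graph `G(h, s)`, whose characteristic tree is a
caterpillar with `h + 2` leaves, with side assignment `s` (`false` = down, `true` = up). -/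
def caterpillarHalin (h : ℕ) (s : ℕ → Bool) : SimpleGraph (CatVert h) :=
  SimpleGraph.fromRel (catRel h s)

/-- An edge of a cubic graph leaving a partially colored region to the right: its color, the two
other colors at its left end, and the colors that may not occur at its right end. -/
structure CutEdge where
  color : Fin 5
  seen : Finset (Fin 5)
  avoid : Finset (Fin 5)

namespace CutEdge

/-- The set of all colors at the left end of a cut edge. -/
def colors (e : CutEdge) : Finset (Fin 5) := insert e.color e.seen

/-- Rename the colors of a cut edge. -/
def map (π : Equiv.Perm (Fin 5)) (e : CutEdge) : CutEdge :=
  ⟨π e.color, e.seen.map π.toEmbedding, e.avoid.map π.toEmbedding⟩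

/-- The cut edge `e` may enter a vertex that it leaves through a transversal edge of color `t`,
whose other end has color set `N`, and through the cut edge `e'`. -/
def Extends (e : CutEdge) (t : Fin 5) (e' : CutEdge) (N : Finset (Fin 5)) : Prop :=
  e.color ≠ t ∧ e.color ≠ e'.color ∧ t ≠ e'.color ∧ e'.seen = {e.color, t} ∧
    Disjoint e'.colors e.avoid ∧ (t ∈ e.seen → e.color ∉ N) ∧
    (e'.color ∈ e.seen → e.color ∈ e'.avoid) ∧ (e'.color ∈ N → t ∈ e'.avoid)

/-- The cut edge `e` may enter a vertex whose other edges have colors `x` and `y` and lead to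
vertices with color sets `X` and `Y`. -/
def ClosesWith (e : CutEdge) (x y : Fin 5) (X Y : Finset (Fin 5)) : Prop :=
  e.color ≠ x ∧ e.color ≠ y ∧ x ≠ y ∧ Disjoint {e.color, x, y} e.avoid ∧
    (x ∈ e.seen → e.color ∉ X) ∧ (y ∈ e.seen → e.color ∉ Y) ∧ ¬(y ∈ X ∧ x ∈ Y)

/-- The cut edge `e` may leave a vertex whose other edges have colors `x` and `y` and lead to
vertices with color sets `X` and `Y`. -/
def OpensWith (e : CutEdge) (x y : Fin 5) (X Y : Finset (Fin 5)) : Prop :=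
  e.color ≠ x ∧ e.color ≠ y ∧ x ≠ y ∧ e.seen = {x, y} ∧
    (e.color ∈ X → x ∈ e.avoid) ∧ (e.color ∈ Y → y ∈ e.avoid) ∧ ¬(y ∈ X ∧ x ∈ Y)

instance (e t e' N) : Decidable (Extends e t e' N) := by unfold Extends; infer_instance
instance (e x y X Y) : Decidable (ClosesWith e x y X Y) := by unfold ClosesWith; infer_instance
instance (e x y X Y) : Decidable (OpensWith e x y X Y) := by unfold OpensWith; infer_instance

theorem colors_map (π : Equiv.Perm (Fin 5)) (e : CutEdge) :
    (e.map π).colors = e.colors.map π.toEmbedding := by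
  simp [colors, map, Finset.map_insert]

theorem Extends.map (π : Equiv.Perm (Fin 5)) {e : CutEdge} {t : Fin 5} {e' : CutEdge}
    {N : Finset (Fin 5)} (h : e.Extends t e' N) :
    (e.map π).Extends (π t) (e'.map π) (N.map π.toEmbedding) := by
  obtain ⟨h1, h2, h3, h4, h5, h6, h7, h8⟩ := h
  refine ⟨?_, ?_, ?_, ?_, ?_, ?_, ?_, ?_⟩
  · simpa [CutEdge.map] using h1
  · simpa [CutEdge.map] using h2
  · simpa [CutEdge.map] using h3
  · simp [CutEdge.map, h4, Finset.map_insert]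
  · rw [colors_map]; simpa [CutEdge.map] using h5
  · simpa [CutEdge.map] using h6
  · simpa [CutEdge.map] using h7
  · simpa [CutEdge.map] using h8

theorem ClosesWith.map (π : Equiv.Perm (Fin 5)) {e : CutEdge} {x y : Fin 5}
    {X Y : Finset (Fin 5)} (h : e.ClosesWith x y X Y) :
    (e.map π).ClosesWith (π x) (π y) (X.map π.toEmbedding) (Y.map π.toEmbedding) := by
  obtain ⟨h1, h2, h3, h4, h5, h6, h7⟩ := h
  refine ⟨?_, ?_, ?_, ?_, ?_, ?_, ?_⟩
  · simpa [CutEdge.map] using h1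
  · simpa [CutEdge.map] using h2
  · simpa [CutEdge.map] using h3
  · have := (Finset.disjoint_map π.toEmbedding).2 h4
    simpa [CutEdge.map, Finset.map_insert] using this
  · simpa [CutEdge.map] using h5
  · simpa [CutEdge.map] using h6
  · simpa [CutEdge.map] using h7

end CutEdge

/-- The three edges of a caterpillar cubic Halin graph that join its first spine vertices and
leaves to the remaining ones: a spine edge and an edge of the exterior cycle on each side. -/
structure Cut where
  spine : CutEdge
  rail : Bool → CutEdge

namespace Cut

/-- Rename the colors of a cut, and exchange its two sides if `b` is `true`. -/
def act (π : Equiv.Perm (Fin 5)) (b : Bool) (s : Cut) : Cut :=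
  ⟨s.spine.map π, fun i => (s.rail (b ^^ i)).map π⟩

/-- The cut `s'` may follow the cut `s` when a spine vertex whose leaf lies on side `b` is added,
with a tree edge of color `t`. -/
def Step (b : Bool) (s : Cut) (t : Fin 5) (s' : Cut) : Prop :=
  s.spine.Extends t s'.spine (s'.rail b).colors ∧
  (s.rail b).Extends t (s'.rail b) s'.spine.colors ∧
  (s'.rail !b).color = (s.rail !b).color ∧ (s'.rail !b).seen = (s.rail !b).seen ∧
  (s.rail !b).avoid ⊆ (s'.rail !b).avoid

/-- The cut `s` may be closed by a triangle with edge colors `x`, `y`, `z`. -/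
def Closes (s : Cut) (x y z : Fin 5) : Prop :=
  s.spine.ClosesWith x y {(s.rail false).color, x, z} {(s.rail true).color, y, z} ∧
  (s.rail false).ClosesWith x z {s.spine.color, x, y} {(s.rail true).color, y, z} ∧
  (s.rail true).ClosesWith y z {s.spine.color, x, y} {(s.rail false).color, x, z}

/-- The cut `s` may be opened by a triangle with edge colors `x`, `y`, `z`. -/
def Opens (s : Cut) (x y z : Fin 5) : Prop :=
  s.spine.OpensWith x y (s.rail false).colors (s.rail true).colors ∧
  (s.rail false).OpensWith x z s.spine.colors (s.rail true).colors ∧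
  (s.rail true).OpensWith y z s.spine.colors (s.rail false).colors

instance (b s t s') : Decidable (Step b s t s') := by unfold Step; infer_instance
instance (s x y z) : Decidable (Closes s x y z) := by unfold Closes; infer_instance
instance (s x y z) : Decidable (Opens s x y z) := by unfold Opens; infer_instance

theorem Step.act (π : Equiv.Perm (Fin 5)) (b : Bool) {i : Bool} {s s' : Cut} {t : Fin 5}
    (h : Step (b ^^ i) s t s') : Step i (s.act π b) (π t) (s'.act π b) := by
  obtain ⟨h1, h2, h3, h4, h5⟩ := h
  have hb : (b ^^ !i) = !(b ^^ i) := by cases b <;> cases i <;> rfl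
  refine ⟨?_, ?_, ?_, ?_, ?_⟩
  · simpa [Cut.act, CutEdge.colors_map] using h1.map π
  · simpa [Cut.act, CutEdge.colors_map] using h2.map π
  · simpa [Cut.act, hb, CutEdge.map] using h3
  · simpa [Cut.act, hb, CutEdge.map] using h4
  · simpa [Cut.act, hb, CutEdge.map] using h5

theorem Closes.act (π : Equiv.Perm (Fin 5)) (b : Bool) {s : Cut} {x y z : Fin 5}
    (h : s.Closes x y z) : ∃ x' y' z', (s.act π b).Closes x' y' z' := by
  obtain ⟨h1, h2, h3⟩ := h
  cases b
  · refine ⟨π x, π y, π z, ?_, ?_, ?_⟩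
    · simpa [Cut.act, CutEdge.map, Finset.map_insert] using h1.map π
    · simpa [Cut.act, CutEdge.map, Finset.map_insert] using h2.map π
    · simpa [Cut.act, CutEdge.map, Finset.map_insert] using h3.map π
  · have symm : ∀ {e : CutEdge} {x y : Fin 5} {X Y : Finset (Fin 5)},
        e.ClosesWith x y X Y → e.ClosesWith y x Y X := by
      rintro e x y X Y ⟨k1, k2, k3, k4, k5, k6, k7⟩
      exact ⟨k2, k1, k3.symm, by rwa [Finset.pair_comm], k6, k5, fun k => k7 k.symm⟩
    refine ⟨π y, π x, π z, ?_, ?_, ?_⟩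
    · simpa [Cut.act, CutEdge.map, Finset.map_insert] using (symm h1).map π
    · simpa [Cut.act, CutEdge.map, Finset.map_insert, Finset.pair_comm (π x) (π y)]
        using h3.map π
    · simpa [Cut.act, CutEdge.map, Finset.map_insert, Finset.pair_comm (π x) (π y)]
        using h2.map π

/-- Starting from the cut `s`, one may add `n` spine vertices with leaves on the sides prescribed
by `σ`, and then close the graph by a triangle. -/
def Completable (σ : ℕ → Bool) (n : ℕ) (s : Cut) : Prop :=
  ∃ (st : ℕ → Cut) (t : ℕ → Fin 5) (x y z : Fin 5), st 0 = s ∧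
    (∀ j < n, Step (σ j) (st j) (t j) (st (j + 1))) ∧ (st n).Closes x y z

theorem Completable.cons {σ : ℕ → Bool} {n : ℕ} {s s' : Cut} {t : Fin 5}
    (h : Step (σ 0) s t s') (hc : Completable (fun j => σ (j + 1)) n s') :
    Completable σ (n + 1) s := by
  obtain ⟨st, u, x, y, z, rfl, h2, h3⟩ := hc
  refine ⟨fun | 0 => s | j + 1 => st j, fun | 0 => t | j + 1 => u j, x, y, z, rfl, ?_, h3⟩
  rintro (_ | j) hj
  · exact h
  · exact h2 j (by omega)

theorem Completable.act (π : Equiv.Perm (Fin 5)) (b : Bool) {σ : ℕ → Bool} {n : ℕ} {s : Cut}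
    (h : Completable (fun j => b ^^ σ j) n s) : Completable σ n (s.act π b) := by
  obtain ⟨st, t, x, y, z, rfl, h2, h3⟩ := h
  obtain ⟨x', y', z', h3'⟩ := h3.act π b
  exact ⟨fun j => (st j).act π b, fun j => π (t j), x', y', z', rfl,
    fun j hj => (h2 j hj).act π b, h3'⟩

/-- Up to renaming colors and exchanging sides, `r` may follow `s` when a spine vertex with leaf on
side `i` is added. -/
def StepTo (i : Bool) (s r : Cut) : Prop :=
  ∃ t π b, Step i s t (r.act π b)

theorem StepTo.completable {σ : ℕ → Bool} {n : ℕ} {s r : Cut} (h : StepTo (σ 0) s r)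
    (hr : ∀ σ', Completable σ' n r) : Completable σ (n + 1) s := by
  obtain ⟨t, π, b, h⟩ := h
  exact .cons h (.act π b (hr _))

/-- The cut with the given colors and sets of seen colors and of colors to avoid, listed for the
spine edge and for the exterior edges on the sides `false` and `true`. -/
def ofEdges (e d u : CutEdge) : Cut := ⟨e, fun i => bif i then u else d⟩

/-- The first of two cuts that alternate with `bent₁` and `bent₂`. -/
def flat₁ : Cut := ofEdges ⟨0, {1, 2}, {1, 2}⟩ ⟨1, {0, 2}, {2}⟩ ⟨2, {0, 3}, {3}⟩

/-- The second of two cuts that alternate with `bent₁` and `bent₂`. -/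
def flat₂ : Cut := ofEdges ⟨0, {1, 2}, {1, 2}⟩ ⟨0, {1, 3}, {1, 3}⟩ ⟨0, {1, 4}, {1, 4}⟩

/-- The first of two cuts that alternate with `flat₁` and `flat₂`. -/
def bent₁ : Cut := ofEdges ⟨0, {1, 2}, ∅⟩ ⟨1, {2, 3}, {2, 3}⟩ ⟨4, {1, 3}, {3}⟩

/-- The second of two cuts that alternate with `flat₁` and `flat₂`. -/
def bent₂ : Cut := ofEdges ⟨0, {1, 2}, ∅⟩ ⟨1, {2, 3}, {2, 3}⟩ ⟨4, {1, 2}, {2}⟩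

theorem flat₁_step (i : Bool) : StepTo i flat₁ bent₁ ∨ StepTo i flat₁ bent₂ := by
  cases i
  · exact .inr ⟨3, ⟨![4, 0, 3, 1, 2], ![1, 3, 4, 2, 0], by decide, by decide⟩, false, by decide⟩
  · exact .inl ⟨4, ⟨![3, 0, 4, 2, 1], ![1, 4, 3, 0, 2], by decide, by decide⟩, true, by decide⟩

theorem flat₂_step (i : Bool) : StepTo i flat₂ bent₁ ∨ StepTo i flat₂ bent₂ := by
  cases i
  · exact .inr ⟨4, ⟨![3, 0, 4, 1, 2], ![1, 3, 4, 0, 2], by decide, by decide⟩, true, by decide⟩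
  · exact .inr ⟨3, ⟨![4, 0, 3, 1, 2], ![1, 3, 4, 2, 0], by decide, by decide⟩, false, by decide⟩

theorem bent₁_step (i : Bool) : StepTo i bent₁ flat₁ ∨ StepTo i bent₁ flat₂ := by
  cases i
  · exact .inl ⟨4, ⟨![1, 0, 4, 3, 2], ![1, 0, 4, 3, 2], by decide, by decide⟩, false, by decide⟩
  · exact .inr ⟨2, ⟨![1, 2, 0, 3, 4], ![2, 0, 1, 3, 4], by decide, by decide⟩, false, by decide⟩

theorem bent₂_step (i : Bool) : StepTo i bent₂ flat₁ ∨ StepTo i bent₂ flat₂ := by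
  cases i
  · exact .inl ⟨4, ⟨![1, 0, 4, 2, 3], ![1, 0, 3, 4, 2], by decide, by decide⟩, false, by decide⟩
  · exact .inr ⟨3, ⟨![1, 3, 0, 2, 4], ![2, 0, 3, 1, 4], by decide, by decide⟩, false, by decide⟩

/-- The cut that follows `s` when a spine vertex with leaf on side `i` is added, with tree edge,
spine edge and exterior edge of colors `t`, `a`, `d`, and with as few colors to avoid as
possible. -/
def next (i : Bool) (s : Cut) (t a d : Fin 5) : Cut :=
  let e := s.spine
  let f := s.rail i
  let e' : CutEdge := ⟨a, {e.color, t},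
    {c ∈ {e.color, t} | c = e.color ∧ a ∈ e.seen ∨ c = t ∧ a ∈ ({d, f.color, t} : Finset _)}⟩
  let f' : CutEdge := ⟨d, {f.color, t},
    {c ∈ {f.color, t} | c = f.color ∧ d ∈ f.seen ∨ c = t ∧ d ∈ ({a, e.color, t} : Finset _)}⟩
  ⟨e', fun j => bif i ^^ j then s.rail j else f'⟩

theorem completable_two_of_next {σ : ℕ → Bool} {s : Cut} (t a d t' a' d' x y z : Fin 5)
    (h : Step (σ 0) s t (next (σ 0) s t a d) ∧
      Step (σ 1) (next (σ 0) s t a d) t' (next (σ 1) (next (σ 0) s t a d) t' a' d') ∧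
      (next (σ 1) (next (σ 0) s t a d) t' a' d').Closes x y z) :
    Completable σ 2 s :=
  .cons h.1 (.cons h.2.1 ⟨fun _ => _, fun _ => 0, x, y, z, rfl, by simp, h.2.2⟩)

theorem bent₁_completable_two (σ : ℕ → Bool) : Completable σ 2 bent₁ := by
  cases h0 : σ 0 <;> cases h1 : σ 1
  · exact completable_two_of_next 4 2 0 1 3 3 4 0 2 (by rw [h0, h1]; decide)
  · exact completable_two_of_next 4 2 0 1 3 0 1 4 2 (by rw [h0, h1]; decide)
  · exact completable_two_of_next 2 3 1 0 2 4 1 0 3 (by rw [h0, h1]; decide)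
  · exact completable_two_of_next 2 3 1 0 1 2 4 3 0 (by rw [h0, h1]; decide)

theorem bent₂_completable_two (σ : ℕ → Bool) : Completable σ 2 bent₂ := by
  cases h0 : σ 0 <;> cases h1 : σ 1
  · exact completable_two_of_next 4 2 0 3 1 2 4 3 0 (by rw [h0, h1]; decide)
  · exact completable_two_of_next 4 2 0 1 3 0 1 4 2 (by rw [h0, h1]; decide)
  · exact completable_two_of_next 3 2 0 4 3 0 1 4 2 (by rw [h0, h1]; decide)
  · exact completable_two_of_next 3 1 0 2 4 1 0 3 4 (by rw [h0, h1]; decide)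

theorem flat_completable_zero (σ : ℕ → Bool) :
    Completable σ 0 flat₁ ∧ Completable σ 0 flat₂ :=
  ⟨⟨fun _ => flat₁, fun _ => 0, 3, 4, 0, rfl, by simp, by decide⟩,
    ⟨fun _ => flat₂, fun _ => 0, 4, 3, 2, rfl, by simp, by decide⟩⟩

theorem flat_completable_succ {n : ℕ}
    (h : ∀ σ, Completable σ n bent₁ ∧ Completable σ n bent₂) (σ : ℕ → Bool) :
    Completable σ (n + 1) flat₁ ∧ Completable σ (n + 1) flat₂ :=
  ⟨(flat₁_step (σ 0)).elim (·.completable fun τ => (h τ).1) (·.completable fun τ => (h τ).2),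
    (flat₂_step (σ 0)).elim (·.completable fun τ => (h τ).1) (·.completable fun τ => (h τ).2)⟩

theorem bent_completable_succ {n : ℕ}
    (h : ∀ σ, Completable σ n flat₁ ∧ Completable σ n flat₂) (σ : ℕ → Bool) :
    Completable σ (n + 1) bent₁ ∧ Completable σ (n + 1) bent₂ :=
  ⟨(bent₁_step (σ 0)).elim (·.completable fun τ => (h τ).1) (·.completable fun τ => (h τ).2),
    (bent₂_step (σ 0)).elim (·.completable fun τ => (h τ).1) (·.completable fun τ => (h τ).2)⟩

theorem bent_completable (n : ℕ) (σ : ℕ → Bool) :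
    Completable σ (n + 1) bent₁ ∧ Completable σ (n + 1) bent₂ := by
  induction n using Nat.twoStepInduction generalizing σ with
  | zero => exact bent_completable_succ flat_completable_zero σ
  | one => exact ⟨bent₁_completable_two σ, bent₂_completable_two σ⟩
  | more n ih _ => exact bent_completable_succ (flat_completable_succ ih) σ

theorem bent₁_opens : bent₁.Opens 2 1 3 := by decide

end Cut

/-- Two edges of colors `a` and `b` at a common vertex, whose other ends have color sets `X` and
`Y`, have distinct colors and are not the middle edges of a bi-colored path or cycle. -/
def StarCompatible (a b : Fin 5) (X Y : Finset (Fin 5)) : Prop :=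
  a ≠ b ∧ ¬(b ∈ X ∧ a ∈ Y)

theorem StarCompatible.symm {a b : Fin 5} {X Y : Finset (Fin 5)} (h : StarCompatible a b X Y) :
    StarCompatible b a Y X :=
  ⟨h.1.symm, fun k => h.2 k.symm⟩

/-- At the vertex `v` of a graph with adjacency relation `A`, the coloring `col` satisfies the
local form of the star edge coloring condition, where `C w` is the set of colors at `w`. -/
def LocallyStar {W : Type*} (A : W → W → Prop) (col : W → W → Fin 5) (C : W → Finset (Fin 5))
    (v : W) : Prop :=
  (∀ x, A v x → col v x ∈ C v) ∧
    ∀ x y, A v x → A v y → x ≠ y → StarCompatible (col v x) (col v y) (C x) (C y)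

theorem LocallyStar.of_three_kinds {W : Type*} {A : W → W → Prop} {col : W → W → Fin 5}
    {C : W → Finset (Fin 5)} {v : W} (P : Fin 3 → W → Prop)
    (hA : ∀ x, A v x → P 0 x ∨ P 1 x ∨ P 2 x) (hP : ∀ i x y, P i x → P i y → x = y)
    (hC : ∀ i x, P i x → col v x ∈ C v)
    (h : ∀ i j x y, i < j → P i x → P j y → StarCompatible (col v x) (col v y) (C x) (C y)) :
    LocallyStar A col C v := by
  have hA' : ∀ x, A v x → ∃ i, P i x := by
    intro x hx
    rcases hA x hx with h | h | h
    exacts [⟨_, h⟩, ⟨_, h⟩, ⟨_, h⟩]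
  refine ⟨fun x hx => ?_, fun x y hx hy hxy => ?_⟩
  · obtain ⟨i, hi⟩ := hA' x hx
    exact hC i x hi
  · obtain ⟨i, hi⟩ := hA' x hx
    obtain ⟨j, hj⟩ := hA' y hy
    rcases lt_trichotomy i j with hij | rfl | hij
    · exact h i j x y hij hi hj
    · exact absurd (hP i x y hi hj) hxy
    · exact (h j i y x hij hj hi).symm

theorem three_le_card_of_not_bicolored {a b c d : ℕ} (hab : a ≠ b) (hbc : b ≠ c) (hcd : c ≠ d)
    (h : ¬(a = c ∧ b = d)) : 3 ≤ ({a, b, c, d} : Finset ℕ).card := by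
  by_cases hac : a = c
  · have hbd : b ≠ d := fun k => h ⟨hac, k⟩
    rw [← Finset.card_eq_three.2 ⟨a, b, d, hab, hac ▸ hcd, hbd, rfl⟩]
    exact Finset.card_le_card (by intro x; simp; tauto)
  · rw [← Finset.card_eq_three.2 ⟨a, b, c, hab, hac, hbc, rfl⟩]
    exact Finset.card_le_card (by intro x; simp; tauto)

theorem exists_isStarEdgeColoring_of_locallyStar {V W : Type*} {G : SimpleGraph V}
    {A : W → W → Prop} {col : W → W → Fin 5} {C : W → Finset (Fin 5)} {f : V → W}
    (hf : Function.Injective f) (hG : ∀ a b, G.Adj a b → A (f a) (f b))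
    (hcol : ∀ a b, col a b = col b a) (h : ∀ v, LocallyStar A col C (f v)) :
    ∃ c, IsStarEdgeColoring G 5 c := by
  let c : Sym2 V → ℕ := Sym2.lift ⟨fun a b => (col (f a) (f b)).val, fun a b => congrArg _ (hcol _ _)⟩
  have hc : ∀ a b, c s(a, b) = (col (f a) (f b)).val := fun a b => rfl
  have hcomm : ∀ a b, c s(a, b) = c s(b, a) := fun a b => by rw [Sym2.eq_swap]
  have hproper : ∀ a b b', G.Adj a b → G.Adj a b' → b ≠ b' → c s(a, b) ≠ c s(a, b') :=
    fun a b b' hb hb' hne heq =>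
      ((h a).2 _ _ (hG _ _ hb) (hG _ _ hb') (hf.ne hne)).1 (Fin.ext heq)
  have hpath : ∀ v0 v1 v2 v3 v4, G.Adj v0 v1 → G.Adj v1 v2 → G.Adj v2 v3 → G.Adj v3 v4 →
      v0 ≠ v2 → v1 ≠ v3 → v2 ≠ v4 →
      3 ≤ ({c s(v0, v1), c s(v1, v2), c s(v2, v3), c s(v3, v4)} : Finset ℕ).card := by
    intro v0 v1 v2 v3 v4 h01 h12 h23 h34 n02 n13 n24
    refine three_le_card_of_not_bicolored ?_ ?_ ?_ ?_
    · rw [hcomm v0]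
      exact hproper _ _ _ h01.symm h12 n02
    · rw [hcomm v1]
      exact hproper _ _ _ h12.symm h23 n13
    · rw [hcomm v2]
      exact hproper _ _ _ h23.symm h34 n24
    · rintro ⟨k1, k2⟩
      refine ((h v2).2 _ _ (hG _ _ h12.symm) (hG _ _ h23) (hf.ne n13)).2 ⟨?_, ?_⟩
      · rw [← show col (f v1) (f v0) = col (f v2) (f v3) from Fin.ext (by rw [← hc, hcomm, k1, hc])]
        exact (h v1).1 _ (hG _ _ h01.symm)
      · rw [← show col (f v3) (f v4) = col (f v2) (f v1) from Fin.ext (by rw [← hc, ← k2, hcomm, hc])]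
        exact (h v3).1 _ (hG _ _ h34)
  refine ⟨c, ?_, hproper, ?_, ?_⟩
  · intro e _
    induction e using Sym2.ind with
    | _ a b => exact (col (f a) (f b)).isLt
  · intro v0 v1 v2 v3 v4 hn h01 h12 h23 h34
    simp only [List.nodup_cons, List.mem_cons, List.not_mem_nil, not_or] at hn
    exact hpath v0 v1 v2 v3 v4 h01 h12 h23 h34 (by tauto) (by tauto) (by tauto)
  · intro v0 v1 v2 v3 hn h01 h12 h23 h30
    simp only [List.nodup_cons, List.mem_cons, List.not_mem_nil, not_or] at hn
    exact hpath v0 v1 v2 v3 v0 h01 h12 h23 h30 (by tauto) (by tauto) (fun k => hn.1.2.1 k.symm)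

theorem List.IsChain.rel_of_mem_zip {α : Type*} {R : α → α → Prop} {x y a b : α} {l : List α}
    (h : (x :: (l ++ [y])).IsChain R) (hab : (a, b) ∈ (x :: l).zip (l ++ [y])) : R a b := by
  induction l generalizing x with
  | nil => simp_all
  | cons z l ih =>
    simp only [List.cons_append, List.isChain_cons_cons, List.zip_cons_cons, List.mem_cons,
      Prod.mk.injEq] at h hab
    rcases hab with ⟨rfl, rfl⟩ | hab
    · exact h.1
    · exact ih h.2 hab

theorem List.isChain_filter_range (p : ℕ → Bool) (n : ℕ) :
    ((List.range n).filter p).IsChain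
      fun a b => a < b ∧ b < n ∧ p a ∧ p b ∧ ∀ k, a < k → k < b → ¬p k := by
  rw [List.isChain_iff_forall_rel_of_append_cons_cons]
  intro a b l₁ l₂ h
  have hs : (l₁ ++ a :: b :: l₂).Pairwise (· < ·) := h ▸ List.pairwise_lt_range.filter p
  have hm : ∀ k, k ∈ l₁ ++ a :: b :: l₂ ↔ k < n ∧ p k := by simp [← h]
  simp only [List.pairwise_append, List.pairwise_cons, List.mem_cons, List.mem_append] at hs hm
  have ha := (hm a).1 (by simp)
  have hb := (hm b).1 (by simp)
  refine ⟨hs.2.1.1 b (by simp), hb.1, ha.2, hb.2, fun k hak hkb hk => ?_⟩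
  rcases (hm k).2 ⟨by omega, hk⟩ with hk | rfl | rfl | hk
  · have := hs.2.2 k hk a (by simp)
    omega
  · omega
  · omega
  · have := hs.2.1.2.1 k hk
    omega

/-- The side of each leaf of `G(h, s)`, where `u_0`, `u_h` count as `false` (down) and `u_1`,
`u_{h+1}` as `true` (up). -/
def leafSide (h : ℕ) (s : ℕ → Bool) (i : ℕ) : Bool :=
  if i = 0 ∨ i = h then false else if i = 1 ∨ i = h + 1 then true else s i

/-- `u_i` and `u_j`, with `i < j`, are consecutive leaves on one side of `G(h, s)`. -/
def LeafLink (h : ℕ) (s : ℕ → Bool) (i j : ℕ) : Prop :=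
  i < j ∧ j < h + 2 ∧ leafSide h s i = leafSide h s j ∧
    ∀ k, i < k → k < j → leafSide h s k ≠ leafSide h s i

theorem filter_leafSide_range (h : ℕ) (hh : 2 ≤ h) (s : ℕ → Bool) (b : Bool) :
    (List.range (h + 2)).filter (fun i => leafSide h s i = b) =
      (bif b then 1 else 0) :: ((List.range' 2 (h - 2)).filter fun i => s i = b) ++
        [bif b then h + 1 else h] := by
  have hr : List.range (h + 2) = [0, 1] ++ List.range' 2 (h - 2) ++ [h, h + 1] := by
    obtain ⟨m, rfl⟩ := Nat.exists_eq_add_of_le hh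
    have hm : List.range' 2 (m + 2) = List.range' 2 m ++ [2 + m, 2 + m + 1] := by
      rw [List.range'_1_concat, List.range'_1_concat]
      simp [add_assoc]
    rw [add_assoc, List.range_eq_range', ← List.range'_append_1, hm]
    simp [List.range']
  have hf : (List.range' 2 (h - 2)).filter (fun i => leafSide h s i = b) =
      (List.range' 2 (h - 2)).filter fun i => s i = b := by
    refine List.filter_congr fun i hi => ?_
    rw [List.mem_range'_1] at hi
    rw [leafSide, if_neg (by omega), if_neg (by omega)]
  have h0 : leafSide h s 0 = false := by simp [leafSide]
  have h1 : leafSide h s 1 = true := by simp [leafSide]; omega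
  have h2 : leafSide h s h = false := by simp [leafSide]
  have h3 : leafSide h s (h + 1) = true := by simp [leafSide]
  rw [hr, List.filter_append, List.filter_append, hf]
  cases b <;> simp [h0, h1, h2, h3]

theorem isChain_leafLink (h : ℕ) (hh : 2 ≤ h) (s : ℕ → Bool) (b : Bool) :
    ((bif b then 1 else 0) :: ((List.range' 2 (h - 2)).filter fun i => s i = b) ++
        [bif b then h + 1 else h]).IsChain (LeafLink h s) := by
  rw [← filter_leafSide_range h hh]
  refine (List.isChain_filter_range _ _).imp ?_
  simp only [decide_eq_true_eq]
  rintro i j ⟨h1, h2, h3, h4, h5⟩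
  exact ⟨h1, h2, h3.trans h4.symm, fun k hk hk' => h3 ▸ h5 k hk hk'⟩

/-- `u_i` and `u_j`, with `i < j`, are consecutive leaves on the exterior cycle of `G(h, s)`. -/
def ExtLink (h : ℕ) (s : ℕ → Bool) (i j : ℕ) : Prop :=
  LeafLink h s i j ∨ i = 0 ∧ j = 1 ∨ i = h ∧ j = h + 1

theorem extLink_of_mem_zip_extCycle {h : ℕ} (hh : 2 ≤ h) {s : ℕ → Bool} {i j : ℕ}
    (hij : (i, j) ∈ (extCycle h s).zip ((extCycle h s).rotate 1)) :
    ExtLink h s i j ∨ ExtLink h s j i := by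
  have hd := (isChain_leafLink h hh s false).imp
    (S := fun i j => ExtLink h s i j ∨ ExtLink h s j i) fun _ _ k => .inl (.inl k)
  have hu := (isChain_leafLink h hh s true).imp
    (S := fun i j => ExtLink h s j i ∨ ExtLink h s i j) fun _ _ k => .inr (.inl k)
  rw [← List.isChain_reverse] at hu
  simp only [cond_false, cond_true, List.reverse_append, List.reverse_cons, List.reverse_nil,
    List.nil_append, List.cons_append] at hd hu
  simp only [extCycle, List.append_assoc, List.cons_append, List.nil_append,
    List.rotate_cons_succ, List.rotate_zero] at hij
  refine List.IsChain.rel_of_mem_zip (R := fun i j => ExtLink h s i j ∨ ExtLink h s j i)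
    (x := 0) (y := 0) (l := ((List.range' 2 (h - 2)).filter fun i => s i = false) ++
      h :: (h + 1) :: (((List.range' 2 (h - 2)).filter fun i => s i = true).reverse ++ [1]))
    ?_ (by simpa using hij)
  have key := List.isChain_append.2 ⟨hd, hu, by
    simp only [Option.mem_def]
    intro x hx y hy
    simp [List.getLast?_cons] at hx hy
    subst hx hy
    exact .inl (.inr (.inr ⟨rfl, rfl⟩))⟩
  have key' := List.isChain_append.2 ⟨key, List.isChain_singleton 0, by
    simp only [Option.mem_def]
    intro x hx y hy
    simp [List.getLast?_cons, List.getLast?_append] at hx hy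
    subst hx hy
    exact .inr (.inr (.inl ⟨rfl, rfl⟩))⟩
  simpa using key'

/-- A left-to-right description of an edge coloring of `G(h, s)` with leaf sides `σ`: `cut i`
consists of the edges that leave the part of `G(h, s)` with spine vertices `v_1, …, v_i`,
`tree j` is the color of the tree edge at `u_j`, and `first`, `last` are the colors of `u_0u_1` and
`u_hu_{h+1}`. -/
structure StripColoring (h : ℕ) (σ : ℕ → Bool) where
  cut : ℕ → Cut
  tree : ℕ → Fin 5
  first : Fin 5
  last : Fin 5
  opens : (cut 1).Opens (tree 0) (tree 1) first
  step : ∀ i, 2 ≤ i → i < h → Cut.Step (σ i) (cut (i - 1)) (tree i) (cut i)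
  closes : (cut (h - 1)).Closes (tree h) (tree (h + 1)) last

theorem nonempty_stripColoring {h : ℕ} (hh : 3 ≤ h) (σ : ℕ → Bool) :
    Nonempty (StripColoring h σ) := by
  obtain ⟨n, rfl⟩ := Nat.exists_eq_add_of_le' hh
  obtain ⟨st, t, x, y, z, h0, h1, h2⟩ := (Cut.bent_completable n fun j => σ (j + 2)).1
  refine ⟨⟨fun i => st (i - 1), fun i => if i = 0 then 2 else if i = 1 then 1 else
    if i = n + 3 then x else if i = n + 3 + 1 then y else t (i - 2), 3, z, ?_, ?_, ?_⟩⟩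
  · simpa [h0] using Cut.bent₁_opens
  · intro i hi hi'
    obtain ⟨j, rfl⟩ := Nat.exists_eq_add_of_le' hi
    have := h1 j (by omega)
    rw [if_neg (by omega), if_neg (by omega), if_neg (by omega), if_neg (by omega)]
    exact this
  · simpa using h2

/-- The edges of `G(h, s)` with `v_i` and `u_j` written as `Sum.inl i` and `Sum.inr j`, directed
from left to right. -/
inductive HalinArc (h : ℕ) (s : ℕ → Bool) : ℕ ⊕ ℕ → ℕ ⊕ ℕ → Prop
  | spine (i : ℕ) (h1 : 1 ≤ i) (h2 : i < h) : HalinArc h s (.inl i) (.inl (i + 1))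
  | tree (i : ℕ) (h1 : 2 ≤ i) (h2 : i < h) : HalinArc h s (.inl i) (.inr i)
  | tree_zero : HalinArc h s (.inl 1) (.inr 0)
  | tree_one : HalinArc h s (.inl 1) (.inr 1)
  | tree_last : HalinArc h s (.inl h) (.inr h)
  | tree_last_succ : HalinArc h s (.inl h) (.inr (h + 1))
  | ext (i j : ℕ) (hij : ExtLink h s i j) : HalinArc h s (.inr i) (.inr j)

/-- Adjacency in `G(h, s)` with `v_i` and `u_j` written as `Sum.inl i` and `Sum.inr j`. -/
def HalinAdj (h : ℕ) (s : ℕ → Bool) (x y : ℕ ⊕ ℕ) : Prop :=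
  HalinArc h s x y ∨ HalinArc h s y x

/-- The vertices of `G(h, s)` with `v_i` and `u_j` written as `Sum.inl i` and `Sum.inr j`. -/
def CatVert.toNat {h : ℕ} : CatVert h → ℕ ⊕ ℕ :=
  Sum.map (fun i => i.val + 1) Fin.val

theorem CatVert.toNat_injective (h : ℕ) : Function.Injective (CatVert.toNat (h := h)) :=
  Function.Injective.sumMap (fun _ _ k => Fin.ext (Nat.succ.inj k)) Fin.val_injective

theorem halinAdj_of_catRel {h : ℕ} (hh : 2 ≤ h) {s : ℕ → Bool} {a b : CatVert h}
    (hab : catRel h s a b) : HalinAdj h s a.toNat b.toNat := by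
  rcases a with i | i <;> rcases b with j | j
  · have hj : j.val = i.val + 1 := hab
    simp only [CatVert.toNat, Sum.map_inl, hj]
    exact .inl (.spine _ (by omega) (by omega))
  · have hi := i.isLt
    simp only [CatVert.toNat, Sum.map_inl, Sum.map_inr]
    rcases hab with ⟨h1, h2 | h2⟩ | ⟨h1, h2 | h2⟩ | ⟨h1, h2, h3⟩
    · rw [h1, h2]
      exact .inl .tree_zero
    · rw [h1, h2]
      exact .inl .tree_one
    · rw [h1, h2, Nat.sub_add_cancel (by omega)]
      exact .inl .tree_last
    · rw [h1, h2, Nat.sub_add_cancel (by omega)]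
      exact .inl .tree_last_succ
    · rw [← h1]
      exact .inl (.tree _ h2 (by omega))
  · exact hab.elim
  · exact (extLink_of_mem_zip_extCycle hh hab).imp (.ext _ _) (.ext _ _)

theorem halinAdj_of_adj {h : ℕ} (hh : 2 ≤ h) {s : ℕ → Bool} {a b : CatVert h}
    (hab : (caterpillarHalin h s).Adj a b) : HalinAdj h s a.toNat b.toNat := by
  rcases ((SimpleGraph.fromRel_adj _ _ _).1 hab).2 with k | k
  · exact halinAdj_of_catRel hh k
  · exact (halinAdj_of_catRel hh k).symm

theorem LeafLink.lt_last {h : ℕ} {s : ℕ → Bool} {i j : ℕ} (hij : LeafLink h s i j) : i < h := by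
  obtain ⟨h1, h2, h3, -⟩ := hij
  by_contra hi
  obtain rfl : i = h := by omega
  obtain rfl : j = i + 1 := by omega
  simp [leafSide] at h3

theorem LeafLink.two_le {h : ℕ} (hh : 2 ≤ h) {s : ℕ → Bool} {i j : ℕ}
    (hij : LeafLink h s i j) : 2 ≤ j := by
  obtain ⟨h1, h2, h3, -⟩ := hij
  by_contra hj
  obtain rfl : j = 1 := by omega
  obtain rfl : i = 0 := by omega
  simp [leafSide] at h3
  omega

theorem LeafLink.left_unique {h : ℕ} {s : ℕ → Bool} {i i' j : ℕ} (hi : LeafLink h s i j)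
    (hi' : LeafLink h s i' j) : i = i' := by
  rcases lt_trichotomy i i' with k | k | k
  · exact absurd (hi'.2.2.1.trans hi.2.2.1.symm) (hi.2.2.2 _ k hi'.1)
  · exact k
  · exact absurd (hi.2.2.1.trans hi'.2.2.1.symm) (hi'.2.2.2 _ k hi.1)

theorem LeafLink.right_unique {h : ℕ} {s : ℕ → Bool} {i j j' : ℕ} (hj : LeafLink h s i j)
    (hj' : LeafLink h s i j') : j = j' := by
  rcases lt_trichotomy j j' with k | k | k
  · exact absurd hj.2.2.1.symm (hj'.2.2.2 _ hj.1 k)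
  · exact k
  · exact absurd hj'.2.2.1.symm (hj.2.2.2 _ hj'.1 k)

namespace StripColoring

variable {h : ℕ} {s : ℕ → Bool} (S : StripColoring h (leafSide h s))

/-- The edge of the exterior cycle that leaves `u_i` to the right. -/
def railFrom (i : ℕ) : CutEdge := (S.cut (max i 1)).rail (leafSide h s i)

/-- The edge coloring of `G(h, s)` described by a strip coloring. -/
def edgeColor : ℕ ⊕ ℕ → ℕ ⊕ ℕ → Fin 5
  | .inl i, .inl j => (S.cut (min i j)).spine.color
  | .inl _, .inr j => S.tree j
  | .inr j, .inl _ => S.tree j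
  | .inr i, .inr j =>
    if max i j = 1 then S.first else if min i j = h then S.last else (S.railFrom (min i j)).color

/-- The set of colors at a vertex of `G(h, s)`. -/
def vertexColors : ℕ ⊕ ℕ → Finset (Fin 5)
  | .inl i => if i < h then (S.cut i).spine.colors else
    {(S.cut (h - 1)).spine.color, S.tree h, S.tree (h + 1)}
  | .inr j => if j < h then (S.railFrom j).colors else
    {((S.cut (h - 1)).rail (leafSide h s j)).color, S.tree j, S.last}

theorem edgeColor_comm (x y : ℕ ⊕ ℕ) : S.edgeColor x y = S.edgeColor y x := by
  rcases x with i | i <;> rcases y with j | j <;> simp [edgeColor, min_comm, max_comm]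

theorem rail_of_leafLink {i j : ℕ} (hij : LeafLink h s i j) {k : ℕ} (hik : max i 1 ≤ k)
    (hkj : k < j) (hk : k < h) :
    ((S.cut k).rail (leafSide h s i)).color = (S.railFrom i).color ∧
      ((S.cut k).rail (leafSide h s i)).seen = (S.railFrom i).seen ∧
      (S.railFrom i).avoid ⊆ ((S.cut k).rail (leafSide h s i)).avoid := by
  induction k, hik using Nat.le_induction with
  | base => exact ⟨rfl, rfl, subset_rfl⟩
  | succ k hik ih =>
    obtain ⟨h1, h2, h3⟩ := ih (by omega) (by omega)
    have hne : leafSide h s (k + 1) ≠ leafSide h s i := hij.2.2.2 _ (by omega) hkj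
    have hs := S.step (k + 1) (by omega) hk
    have hb : (!leafSide h s (k + 1)) = leafSide h s i := by
      cases h4 : leafSide h s (k + 1) <;> cases h5 : leafSide h s i <;> simp_all
    obtain ⟨-, -, k1, k2, k3⟩ := hs
    rw [hb, Nat.add_sub_cancel] at k1 k2 k3
    exact ⟨k1.trans h1, k2.trans h2, h3.trans k3⟩

end StripColoring

namespace CutEdge

variable {W : Type*} {A : W → W → Prop} {col : W → W → Fin 5} {C : W → Finset (Fin 5)} {v : W}
  {P Q R : W → Prop} {e e' : CutEdge} {x y : Fin 5} {X Y : Finset (Fin 5)}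

theorem Extends.locallyStar (h : e.Extends x e' X) (hA : ∀ w, A v w → P w ∨ Q w ∨ R w)
    (hP : ∀ w w', P w → P w' → w = w') (hQ : ∀ w w', Q w → Q w' → w = w')
    (hR : ∀ w w', R w → R w' → w = w')
    (hPc : ∀ w, P w → col v w = e.color ∧ C w = e.colors)
    (hQc : ∀ w, Q w → col v w = x ∧ C w = X)
    (hRc : ∀ w, R w → col v w = e'.color ∧ Disjoint (C w) e'.avoid) (hv : C v = e'.colors) :
    LocallyStar A col C v := by
  obtain ⟨h1, h2, h3, h4, h5, h6, h7, h8⟩ := h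
  refine .of_three_kinds ![P, Q, R] hA (fun i => ?_) (fun i w hw => ?_)
    (fun i j w w' hij hi hj => ?_)
  · fin_cases i
    exacts [hP, hQ, hR]
  · rw [hv, colors, h4]
    fin_cases i
    · simp [(hPc w hw).1]
    · simp [(hQc w hw).1]
    · simp [(hRc w hw).1]
  · fin_cases i <;> fin_cases j <;> simp at hij
    · obtain ⟨k1, k2⟩ := hPc w hi
      obtain ⟨k3, k4⟩ := hQc w' hj
      rw [k1, k2, k3, k4]
      refine ⟨h1, fun k => h6 ?_ k.2⟩
      simpa [colors, h1.symm] using k.1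
    · obtain ⟨k1, k2⟩ := hPc w hi
      obtain ⟨k3, k4⟩ := hRc w' hj
      rw [k1, k2, k3]
      refine ⟨h2, fun k => Finset.disjoint_left.1 k4 k.2 (h7 ?_)⟩
      simpa [colors, h2.symm] using k.1
    · obtain ⟨k1, k2⟩ := hQc w hi
      obtain ⟨k3, k4⟩ := hRc w' hj
      rw [k1, k2, k3]
      exact ⟨h3, fun k => Finset.disjoint_left.1 k4 k.2 (h8 k.1)⟩

theorem OpensWith.locallyStar (h : e.OpensWith x y X Y) (hA : ∀ w, A v w → P w ∨ Q w ∨ R w)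
    (hP : ∀ w w', P w → P w' → w = w') (hQ : ∀ w w', Q w → Q w' → w = w')
    (hR : ∀ w w', R w → R w' → w = w')
    (hPc : ∀ w, P w → col v w = x ∧ C w = X) (hQc : ∀ w, Q w → col v w = y ∧ C w = Y)
    (hRc : ∀ w, R w → col v w = e.color ∧ Disjoint (C w) e.avoid) (hv : C v = e.colors) :
    LocallyStar A col C v := by
  obtain ⟨h1, h2, h3, h4, h5, h6, h7⟩ := h
  refine .of_three_kinds ![P, Q, R] hA (fun i => ?_) (fun i w hw => ?_)
    (fun i j w w' hij hi hj => ?_)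
  · fin_cases i
    exacts [hP, hQ, hR]
  · rw [hv, colors, h4]
    fin_cases i
    · simp [(hPc w hw).1]
    · simp [(hQc w hw).1]
    · simp [(hRc w hw).1]
  · fin_cases i <;> fin_cases j <;> simp at hij
    · obtain ⟨k1, k2⟩ := hPc w hi
      obtain ⟨k3, k4⟩ := hQc w' hj
      rw [k1, k2, k3, k4]
      exact ⟨h3, h7⟩
    · obtain ⟨k1, k2⟩ := hPc w hi
      obtain ⟨k3, k4⟩ := hRc w' hj
      rw [k1, k2, k3]
      exact ⟨h1.symm, fun k => Finset.disjoint_left.1 k4 k.2 (h5 k.1)⟩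
    · obtain ⟨k1, k2⟩ := hQc w hi
      obtain ⟨k3, k4⟩ := hRc w' hj
      rw [k1, k2, k3]
      exact ⟨h2.symm, fun k => Finset.disjoint_left.1 k4 k.2 (h6 k.1)⟩

theorem ClosesWith.locallyStar (h : e.ClosesWith x y X Y) (hA : ∀ w, A v w → P w ∨ Q w ∨ R w)
    (hP : ∀ w w', P w → P w' → w = w') (hQ : ∀ w w', Q w → Q w' → w = w')
    (hR : ∀ w w', R w → R w' → w = w')
    (hPc : ∀ w, P w → col v w = e.color ∧ C w = e.colors)
    (hQc : ∀ w, Q w → col v w = x ∧ C w = X) (hRc : ∀ w, R w → col v w = y ∧ C w = Y)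
    (hv : C v = {e.color, x, y}) : LocallyStar A col C v := by
  obtain ⟨h1, h2, h3, h4, h5, h6, h7⟩ := h
  refine .of_three_kinds ![P, Q, R] hA (fun i => ?_) (fun i w hw => ?_)
    (fun i j w w' hij hi hj => ?_)
  · fin_cases i
    exacts [hP, hQ, hR]
  · rw [hv]
    fin_cases i
    · simp [(hPc w hw).1]
    · simp [(hQc w hw).1]
    · simp [(hRc w hw).1]
  · fin_cases i <;> fin_cases j <;> simp at hij
    · obtain ⟨k1, k2⟩ := hPc w hi
      obtain ⟨k3, k4⟩ := hQc w' hj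
      rw [k1, k2, k3, k4]
      refine ⟨h1, fun k => h5 ?_ k.2⟩
      simpa [colors, h1.symm] using k.1
    · obtain ⟨k1, k2⟩ := hPc w hi
      obtain ⟨k3, k4⟩ := hRc w' hj
      rw [k1, k2, k3, k4]
      refine ⟨h2, fun k => h6 ?_ k.2⟩
      simpa [colors, h2.symm] using k.1
    · obtain ⟨k1, k2⟩ := hQc w hi
      obtain ⟨k3, k4⟩ := hRc w' hj
      rw [k1, k2, k3, k4]
      exact ⟨h3, h7⟩

end CutEdge

theorem leafSide_zero (h : ℕ) (s : ℕ → Bool) : leafSide h s 0 = false := by simp [leafSide]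

theorem leafSide_one {h : ℕ} (hh : 2 ≤ h) (s : ℕ → Bool) : leafSide h s 1 = true := by
  simp [leafSide]
  omega

theorem leafSide_last (h : ℕ) (s : ℕ → Bool) : leafSide h s h = false := by simp [leafSide]

theorem leafSide_last_succ (h : ℕ) (s : ℕ → Bool) : leafSide h s (h + 1) = true := by
  simp [leafSide]

namespace StripColoring

variable {h : ℕ} {s : ℕ → Bool} (S : StripColoring h (leafSide h s))

theorem edgeColor_of_leafLink (hh : 2 ≤ h) {i j : ℕ} (hij : LeafLink h s i j) :
    S.edgeColor (.inr i) (.inr j) = (S.railFrom i).color := by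
  have h1 := hij.two_le hh
  have h2 := hij.lt_last
  have h3 := hij.1
  rw [edgeColor, max_eq_right h3.le, min_eq_left h3.le, if_neg (by omega), if_neg (by omega)]

theorem vertexColors_inr_of_lt {j : ℕ} (hj : j < h) :
    S.vertexColors (.inr j) = (S.railFrom j).colors := if_pos hj

theorem vertexColors_inl_of_lt {i : ℕ} (hi : i < h) :
    S.vertexColors (.inl i) = (S.cut i).spine.colors := if_pos hi

theorem vertexColors_inl_last :
    S.vertexColors (.inl h) = {(S.cut (h - 1)).spine.color, S.tree h, S.tree (h + 1)} :=
  if_neg (lt_irrefl h)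

theorem vertexColors_inr_last :
    S.vertexColors (.inr h) = {((S.cut (h - 1)).rail false).color, S.tree h, S.last} := by
  rw [vertexColors, if_neg (by omega), leafSide_last]

theorem vertexColors_inr_last_succ : S.vertexColors (.inr (h + 1)) =
    {((S.cut (h - 1)).rail true).color, S.tree (h + 1), S.last} := by
  rw [vertexColors, if_neg (by omega), leafSide_last_succ]

theorem railFrom_of_pos {i : ℕ} (hi : 1 ≤ i) :
    S.railFrom i = (S.cut i).rail (leafSide h s i) := by
  rw [railFrom, max_eq_left hi]

theorem rail_pred_of_leafLink (hh : 2 ≤ h) {i j : ℕ} (hij : LeafLink h s i j) {k : ℕ}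
    (hk : min j h = k + 1) :
    S.edgeColor (.inr j) (.inr i) = ((S.cut k).rail (leafSide h s j)).color ∧
      S.vertexColors (.inr i) = ((S.cut k).rail (leafSide h s j)).colors ∧
      (S.railFrom i).avoid ⊆ ((S.cut k).rail (leafSide h s j)).avoid := by
  have h1 := hij.two_le hh
  have h2 := hij.lt_last
  have h3 := hij.1
  obtain ⟨k1, k2, k3⟩ := S.rail_of_leafLink hij (k := k) (by omega) (by omega) (by omega)
  rw [← hij.2.2.1]
  refine ⟨?_, ?_, k3⟩
  · rw [edgeColor_comm, S.edgeColor_of_leafLink hh hij, k1]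
  · rw [S.vertexColors_inr_of_lt h2, CutEdge.colors, CutEdge.colors, k1, k2]

theorem disjoint_vertexColors_inr (hh : 2 ≤ h) {i j : ℕ} (hij : LeafLink h s i j) :
    Disjoint (S.vertexColors (.inr j)) (S.railFrom i).avoid := by
  have hj := hij.two_le hh
  rcases lt_or_ge j h with hjh | hjh
  · obtain ⟨-, -, k⟩ := S.rail_pred_of_leafLink hh hij (k := j - 1) (by omega)
    rw [S.vertexColors_inr_of_lt hjh, S.railFrom_of_pos (by omega)]
    exact (S.step j hj hjh).2.1.2.2.2.2.1.mono_right k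
  · obtain ⟨-, -, k⟩ := S.rail_pred_of_leafLink hh hij (k := h - 1) (by omega)
    obtain rfl | rfl : j = h ∨ j = h + 1 := by have := hij.2.1; omega
    · rw [leafSide_last] at k
      rw [vertexColors_inr_last]
      exact S.closes.2.1.2.2.2.1.mono_right k
    · rw [leafSide_last_succ] at k
      rw [vertexColors_inr_last_succ]
      exact S.closes.2.2.2.2.2.1.mono_right k

theorem disjoint_vertexColors_inl {i : ℕ} (hi : 1 ≤ i) (hih : i < h) :
    Disjoint (S.vertexColors (.inl (i + 1))) (S.cut i).spine.avoid := by
  rcases Nat.lt_or_ge (i + 1) h with hlt | hge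
  · rw [S.vertexColors_inl_of_lt hlt]
    exact (S.step (i + 1) (by omega) hlt).1.2.2.2.2.1
  · obtain rfl : h = i + 1 := by omega
    rw [vertexColors_inl_last]
    exact S.closes.1.2.2.2.1

theorem edgeColor_spine (i : ℕ) :
    S.edgeColor (.inl i) (.inl (i + 1)) = (S.cut i).spine.color := by
  rw [edgeColor, min_eq_left i.le_succ]

theorem locallyStar_inl_one (hh : 3 ≤ h) :
    LocallyStar (HalinAdj h s) S.edgeColor S.vertexColors (.inl 1) := by
  refine S.opens.1.locallyStar (P := (· = .inr 0)) (Q := (· = .inr 1)) (R := (· = .inl 2))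
    ?_ (by grind) (by grind) (by grind) ?_ ?_ ?_ ?_
  · rintro w (k | k) <;> cases k <;> grind
  · rintro _ rfl
    refine ⟨rfl, ?_⟩
    rw [S.vertexColors_inr_of_lt (by omega), railFrom, leafSide_zero]
    rfl
  · rintro _ rfl
    refine ⟨rfl, ?_⟩
    rw [S.vertexColors_inr_of_lt (by omega), railFrom, leafSide_one (by omega)]
    rfl
  · rintro _ rfl
    exact ⟨S.edgeColor_spine 1, S.disjoint_vertexColors_inl le_rfl (by omega)⟩
  · exact S.vertexColors_inl_of_lt (by omega)

theorem locallyStar_inl {i : ℕ} (hi : 2 ≤ i) (hih : i < h) :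
    LocallyStar (HalinAdj h s) S.edgeColor S.vertexColors (.inl i) := by
  obtain ⟨j, rfl⟩ := Nat.exists_eq_add_of_le' (show 1 ≤ i by omega)
  refine (S.step (j + 1) hi hih).1.locallyStar (P := (· = .inl j)) (Q := (· = .inr (j + 1)))
    (R := (· = .inl (j + 1 + 1))) ?_ (by grind) (by grind) (by grind) ?_ ?_ ?_ ?_
  · rintro w (k | k) <;> cases k <;> grind
  · rintro _ rfl
    refine ⟨?_, S.vertexColors_inl_of_lt (by omega)⟩
    rw [edgeColor_comm, edgeColor_spine]
    rfl
  · rintro _ rfl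
    refine ⟨rfl, ?_⟩
    rw [S.vertexColors_inr_of_lt hih, S.railFrom_of_pos (by omega)]
  · rintro _ rfl
    exact ⟨S.edgeColor_spine _, S.disjoint_vertexColors_inl (by omega) hih⟩
  · exact S.vertexColors_inl_of_lt hih

theorem locallyStar_inl_last (hh : 2 ≤ h) :
    LocallyStar (HalinAdj h s) S.edgeColor S.vertexColors (.inl h) := by
  refine S.closes.1.locallyStar (P := (· = .inl (h - 1))) (Q := (· = .inr h))
    (R := (· = .inr (h + 1))) ?_ (by grind) (by grind) (by grind) ?_ ?_ ?_ ?_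
  · rintro w (k | k) <;> cases k <;> grind
  · rintro _ rfl
    refine ⟨?_, S.vertexColors_inl_of_lt (by omega)⟩
    rw [edgeColor, min_eq_right (by omega)]
  · rintro _ rfl
    refine ⟨rfl, ?_⟩
    rw [vertexColors_inr_last]
  · rintro _ rfl
    refine ⟨rfl, ?_⟩
    rw [vertexColors_inr_last_succ]
  · exact S.vertexColors_inl_last

theorem locallyStar_inr {j : ℕ} (hj : 2 ≤ j) (hjh : j < h) :
    LocallyStar (HalinAdj h s) S.edgeColor S.vertexColors (.inr j) := by
  refine (S.step j hj hjh).2.1.locallyStar (P := fun w => ∃ i, w = .inr i ∧ LeafLink h s i j)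
    (Q := (· = .inl j)) (R := fun w => ∃ k, w = .inr k ∧ LeafLink h s j k) ?_ ?_ (by grind) ?_
    ?_ ?_ ?_ ?_
  · rintro w (k | k) <;> cases k <;> first | omega | grind [ExtLink]
  · rintro _ _ ⟨i, rfl, hi⟩ ⟨i', rfl, hi'⟩
    rw [hi.left_unique hi']
  · rintro _ _ ⟨i, rfl, hi⟩ ⟨i', rfl, hi'⟩
    rw [hi.right_unique hi']
  · rintro _ ⟨i, rfl, hi⟩
    obtain ⟨k1, k2, -⟩ := S.rail_pred_of_leafLink (by omega) hi (k := j - 1) (by omega)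
    exact ⟨k1, k2⟩
  · rintro _ rfl
    exact ⟨rfl, S.vertexColors_inl_of_lt hjh⟩
  · rintro _ ⟨i, rfl, hi⟩
    rw [← S.railFrom_of_pos (by omega), S.edgeColor_of_leafLink (by omega) hi]
    exact ⟨rfl, S.disjoint_vertexColors_inr (by omega) hi⟩
  · rw [S.vertexColors_inr_of_lt hjh, S.railFrom_of_pos (by omega)]

theorem railFrom_zero : S.railFrom 0 = (S.cut 1).rail false := by
  rw [railFrom, leafSide_zero]
  rfl

theorem railFrom_one (hh : 2 ≤ h) : S.railFrom 1 = (S.cut 1).rail true := by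
  rw [railFrom, leafSide_one hh]
  rfl

theorem locallyStar_inr_zero (hh : 3 ≤ h) :
    LocallyStar (HalinAdj h s) S.edgeColor S.vertexColors (.inr 0) := by
  refine S.opens.2.1.locallyStar (P := (· = .inl 1)) (Q := (· = .inr 1))
    (R := fun w => ∃ k, w = .inr k ∧ LeafLink h s 0 k) ?_ (by grind) (by grind) ?_ ?_ ?_ ?_ ?_
  · rintro w (k | k) <;> cases k <;> first | omega | grind [ExtLink, LeafLink]
  · rintro _ _ ⟨i, rfl, hi⟩ ⟨i', rfl, hi'⟩
    rw [hi.right_unique hi']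
  · rintro _ rfl
    exact ⟨rfl, S.vertexColors_inl_of_lt (by omega)⟩
  · rintro _ rfl
    rw [S.vertexColors_inr_of_lt (by omega), S.railFrom_one (by omega)]
    exact ⟨rfl, rfl⟩
  · rintro _ ⟨i, rfl, hi⟩
    rw [← railFrom_zero, S.edgeColor_of_leafLink (by omega) hi]
    exact ⟨rfl, S.disjoint_vertexColors_inr (by omega) hi⟩
  · rw [S.vertexColors_inr_of_lt (by omega), S.railFrom_zero]

theorem locallyStar_inr_one (hh : 3 ≤ h) :
    LocallyStar (HalinAdj h s) S.edgeColor S.vertexColors (.inr 1) := by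
  refine S.opens.2.2.locallyStar (P := (· = .inl 1)) (Q := (· = .inr 0))
    (R := fun w => ∃ k, w = .inr k ∧ LeafLink h s 1 k) ?_ (by grind) (by grind) ?_ ?_ ?_ ?_ ?_
  · have h1 : ∀ i, ¬LeafLink h s i 1 := fun i hi => by have := hi.two_le (by omega); omega
    rintro w (k | k) <;> cases k <;> first | omega | grind [ExtLink]
  · rintro _ _ ⟨i, rfl, hi⟩ ⟨i', rfl, hi'⟩
    rw [hi.right_unique hi']
  · rintro _ rfl
    exact ⟨rfl, S.vertexColors_inl_of_lt (by omega)⟩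
  · rintro _ rfl
    rw [S.vertexColors_inr_of_lt (by omega), S.railFrom_zero]
    exact ⟨rfl, rfl⟩
  · rintro _ ⟨i, rfl, hi⟩
    rw [← S.railFrom_one (by omega), S.edgeColor_of_leafLink (by omega) hi]
    exact ⟨rfl, S.disjoint_vertexColors_inr (by omega) hi⟩
  · rw [S.vertexColors_inr_of_lt (by omega), S.railFrom_one (by omega)]

theorem edgeColor_last (hh : 2 ≤ h) : S.edgeColor (.inr h) (.inr (h + 1)) = S.last := by
  rw [edgeColor, max_eq_right h.le_succ, min_eq_left h.le_succ, if_neg (by omega), if_pos rfl]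

theorem locallyStar_inr_last (hh : 3 ≤ h) :
    LocallyStar (HalinAdj h s) S.edgeColor S.vertexColors (.inr h) := by
  refine S.closes.2.1.locallyStar (P := fun w => ∃ i, w = .inr i ∧ LeafLink h s i h)
    (Q := (· = .inl h)) (R := (· = .inr (h + 1))) ?_ ?_ (by grind) (by grind) ?_ ?_ ?_ ?_
  · have h1 : ∀ i, ¬LeafLink h s h i := fun i hi => lt_irrefl h hi.lt_last
    rintro w (k | k) <;> cases k <;> first | omega | grind [ExtLink]
  · rintro _ _ ⟨i, rfl, hi⟩ ⟨i', rfl, hi'⟩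
    rw [hi.left_unique hi']
  · rintro _ ⟨i, rfl, hi⟩
    obtain ⟨k1, k2, -⟩ := S.rail_pred_of_leafLink (by omega) hi (k := h - 1) (by omega)
    rw [leafSide_last] at k1 k2
    exact ⟨k1, k2⟩
  · rintro _ rfl
    exact ⟨rfl, S.vertexColors_inl_last⟩
  · rintro _ rfl
    exact ⟨S.edgeColor_last (by omega), S.vertexColors_inr_last_succ⟩
  · exact S.vertexColors_inr_last

theorem locallyStar_inr_last_succ (hh : 3 ≤ h) :
    LocallyStar (HalinAdj h s) S.edgeColor S.vertexColors (.inr (h + 1)) := by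
  refine S.closes.2.2.locallyStar (P := fun w => ∃ i, w = .inr i ∧ LeafLink h s i (h + 1))
    (Q := (· = .inl h)) (R := (· = .inr h)) ?_ ?_ (by grind) (by grind) ?_ ?_ ?_ ?_
  · have h1 : ∀ i, ¬LeafLink h s (h + 1) i := fun i hi => by have := hi.lt_last; omega
    rintro w (k | k) <;> cases k <;> first | omega | grind [ExtLink]
  · rintro _ _ ⟨i, rfl, hi⟩ ⟨i', rfl, hi'⟩
    rw [hi.left_unique hi']
  · rintro _ ⟨i, rfl, hi⟩
    obtain ⟨k1, k2, -⟩ := S.rail_pred_of_leafLink (by omega) hi (k := h - 1) (by omega)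
    rw [leafSide_last_succ] at k1 k2
    exact ⟨k1, k2⟩
  · rintro _ rfl
    exact ⟨rfl, S.vertexColors_inl_last⟩
  · rintro _ rfl
    exact ⟨(S.edgeColor_comm _ _).trans (S.edgeColor_last (by omega)), S.vertexColors_inr_last⟩
  · exact S.vertexColors_inr_last_succ

theorem locallyStar (hh : 3 ≤ h) (v : CatVert h) :
    LocallyStar (HalinAdj h s) S.edgeColor S.vertexColors v.toNat := by
  rcases v with ⟨i, hi⟩ | ⟨j, hj⟩
  · change LocallyStar (HalinAdj h s) S.edgeColor S.vertexColors (.inl (i + 1))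
    rcases Nat.eq_zero_or_pos i with rfl | hi0
    · exact S.locallyStar_inl_one hh
    · rcases Nat.lt_or_ge (i + 1) h with hlt | hge
      · exact S.locallyStar_inl (by omega) hlt
      · obtain rfl : h = i + 1 := by omega
        exact S.locallyStar_inl_last (by omega)
  · change LocallyStar (HalinAdj h s) S.edgeColor S.vertexColors (.inr j)
    rcases Nat.lt_or_ge j h with hlt | hge
    · match j with
      | 0 => exact S.locallyStar_inr_zero hh
      | 1 => exact S.locallyStar_inr_one hh
      | j + 2 => exact S.locallyStar_inr (by omega) hlt
    · obtain rfl | rfl : j = h ∨ j = h + 1 := by omega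
      · exact S.locallyStar_inr_last hh
      · exact S.locallyStar_inr_last_succ hh

end StripColoring

/-- Every caterpillar cubic Halin graph `G(h, s)` with `h ≥ 3` has a star 5-edge coloring. -/
theorem caterpillarHalin_exists_isStarEdgeColoring {h : ℕ} (hh : 3 ≤ h) (s : ℕ → Bool) :
    ∃ c : Sym2 (CatVert h) → ℕ, IsStarEdgeColoring (caterpillarHalin h s) 5 c := by
  obtain ⟨S⟩ := nonempty_stripColoring hh (leafSide h s)
  exact exists_isStarEdgeColoring_of_locallyStar (CatVert.toNat_injective h)
    (fun _ _ => halinAdj_of_adj (by omega)) S.edgeColor_comm (S.locallyStar hh)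

/-- Inductive step: for `h ≥ 6`, if every caterpillar cubic Halin graph `G(h-2, s')`
admits a star 5-edge coloring, then so does every `G(h, s)`. -/
theorem caterpillarHalin_star5_step (h : ℕ) (hh : 6 ≤ h)
    (ih : ∀ s' : ℕ → Bool,
      ∃ c : Sym2 (CatVert (h - 2)) → ℕ, IsStarEdgeColoring (caterpillarHalin (h - 2) s') 5 c) :
    ∀ s : ℕ → Bool,
      ∃ c : Sym2 (CatVert h) → ℕ, IsStarEdgeColoring (caterpillarHalin h s) 5 c := by
  exact caterpillarHalin_exists_isStarEdgeColoring (by omega)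
end

section
/- For every h ≥ 3, the necklace Ne_h has star chromatic index exactly 5: Ne_h admits a star 5-edge coloring but admits no star 4-edge coloring. -/
/-- Vertices of the necklace `Ne_h`: `Sum.inl i` is the spine vertex `v_{i+1}`
(for `i : Fin h`) and `Sum.inr j` is the leaf `u_j` (for `j : Fin (h+2)`). -/
abbrev NeckVert (h : ℕ) := Fin h ⊕ Fin (h + 2)

/-- The indices of the leaves along the exterior cycle of the necklace `Ne_h`:
`u_0, u_2, u_3, …, u_{h-1}, u_h, u_{h+1}, u_1` (and back to `u_0`). -/
def neckCycle (h : ℕ) : List ℕ := 0 :: List.range' 2 (h - 2) ++ [h, h + 1, 1]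

/-- Base adjacency relation of `Ne_h`: spine edges `v_i v_{i+1}`; tree edges
`v_1 u_0`, `v_1 u_1`, `v_h u_h`, `v_h u_{h+1}`, and `v_i u_i` for `2 ≤ i ≤ h - 1`;
and the exterior cycle through the leaves, whose consecutive pairs (including the
wrap-around pair) are exactly the pairs of `neckCycle h` zipped with its rotation. -/
def neckRel (h : ℕ) : NeckVert h → NeckVert h → Prop
  | Sum.inl i, Sum.inl i' => i'.val = i.val + 1
  | Sum.inl i, Sum.inr j =>
      (i.val = 0 ∧ (j.val = 0 ∨ j.val = 1)) ∨
      (i.val = h - 1 ∧ (j.val = h ∨ j.val = h + 1)) ∨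
      (j.val = i.val + 1 ∧ 2 ≤ j.val ∧ j.val ≤ h - 1)
  | Sum.inr j, Sum.inr j' => (j.val, j'.val) ∈ (neckCycle h).zip ((neckCycle h).rotate 1)
  | _, _ => False

/-- The necklace `Ne_h`: the cubic Halin graph over a caterpillar with `h + 2` leaves
having all leaf-edges on the same side of the spine. -/
def necklace (h : ℕ) : SimpleGraph (NeckVert h) := SimpleGraph.fromRel (neckRel h)

/-- The star condition at a vertex of degree three: `own i` is the color of its `i`-th edge, and
`pal i` lists the colors of the edges at its `i`-th neighbor. -/
def StarAt {α : Type*} (own : Fin 3 → α) (pal : Fin 3 → Fin 3 → α) : Prop :=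
  ∀ i j, i ≠ j → ¬ ((∃ m, pal i m = own j) ∧ ∃ m, pal j m = own i)

instance {α : Type*} [DecidableEq α] (own : Fin 3 → α) (pal : Fin 3 → Fin 3 → α) :
    Decidable (StarAt own pal) := by
  unfold StarAt; infer_instance

theorem three_le_card_of_not_alternating {a b c d : ℕ} (hab : a ≠ b) (hbc : b ≠ c) (hcd : c ≠ d)
    (h : ¬ (a = c ∧ b = d)) : 3 ≤ ({a, b, c, d} : Finset ℕ).card := by
  by_cases hac : a = c
  · have hbd : b ≠ d := fun hbd => h ⟨hac, hbd⟩
    have hs : ({a, b, d} : Finset ℕ) ⊆ {a, b, c, d} := by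
      intro x; simp only [Finset.mem_insert, Finset.mem_singleton]; tauto
    have := Finset.card_le_card hs
    rwa [Finset.card_eq_three.2 ⟨a, b, d, hab, hac ▸ hcd, hbd, rfl⟩] at this
  · have hs : ({a, b, c} : Finset ℕ) ⊆ {a, b, c, d} := by
      intro x; simp only [Finset.mem_insert, Finset.mem_singleton]; tauto
    have := Finset.card_le_card hs
    rwa [Finset.card_eq_three.2 ⟨a, b, c, hab, hac, hbc, rfl⟩] at this

/-- A criterion for star edge colorings of graphs of maximum degree three, by a check at every
vertex of the colors seen by the vertex and by its neighbors. -/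
theorem isStarEdgeColoring_of_starAt {V W : Type*} {G : SimpleGraph V} {n : ℕ} {c : Sym2 V → ℕ}
    (φ : V → W) (hφ : Function.Injective φ) (nb : W → Fin 3 → W) (col : W → Fin 3 → ℕ)
    (hadj : ∀ u v, G.Adj u v → ∃ i, nb (φ u) i = φ v ∧ c s(u, v) = col (φ u) i)
    (hlt : ∀ u i, col (φ u) i < n) (hinj : ∀ u, Function.Injective (col (φ u)))
    (hstar : ∀ u, StarAt (col (φ u)) fun i => col (nb (φ u) i)) :
    IsStarEdgeColoring G n c := by
  have proper : ∀ a b b' : V, G.Adj a b → G.Adj a b' → b ≠ b' → c s(a, b) ≠ c s(a, b') := by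
    intro a b b' hb hb' hne heq
    obtain ⟨i, hi, hci⟩ := hadj a b hb
    obtain ⟨j, hj, hcj⟩ := hadj a b' hb'
    have hij : i = j := hinj a (by rw [← hci, ← hcj, heq])
    exact hne (hφ (by rw [← hi, ← hj, hij]))
  have alt : ∀ v0 v1 v2 v3 v4 : V, G.Adj v0 v1 → G.Adj v1 v2 → G.Adj v2 v3 → G.Adj v3 v4 →
      v1 ≠ v3 → ¬ (c s(v0, v1) = c s(v2, v3) ∧ c s(v1, v2) = c s(v3, v4)) := by
    rintro v0 v1 v2 v3 v4 h01 h12 h23 h34 hne ⟨h1, h2⟩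
    obtain ⟨i, hi, hci⟩ := hadj v2 v1 h12.symm
    obtain ⟨j, hj, hcj⟩ := hadj v2 v3 h23
    obtain ⟨m, -, hcm⟩ := hadj v1 v0 h01.symm
    obtain ⟨m', -, hcm'⟩ := hadj v3 v4 h34
    have hij : i ≠ j := fun hij => hne (hφ (by rw [← hi, ← hj, hij]))
    refine hstar v2 i j hij ⟨⟨m, ?_⟩, m', ?_⟩
    · change col (nb (φ v2) i) m = _
      rw [hi, ← hcm, ← hcj, Sym2.eq_swap, h1]
    · change col (nb (φ v2) j) m' = _
      rw [hj, ← hcm', ← hci, ← h2, Sym2.eq_swap]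
  have proper' : ∀ a b b' : V, G.Adj b a → G.Adj a b' → b ≠ b' → c s(b, a) ≠ c s(a, b') := by
    intro a b b' hb hb' hne
    rw [Sym2.eq_swap]
    exact proper a b b' hb.symm hb' hne
  refine ⟨?_, proper, ?_, ?_⟩
  · intro e
    induction e with
    | h u v =>
      intro he
      obtain ⟨i, -, hi⟩ := hadj u v he
      exact hi ▸ hlt u i
  · intro v0 v1 v2 v3 v4 hnd h01 h12 h23 h34
    simp only [List.nodup_cons, List.mem_cons, List.not_mem_nil, or_false, not_or] at hnd
    exact three_le_card_of_not_alternating (proper' _ _ _ h01 h12 (by tauto))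
      (proper' _ _ _ h12 h23 (by tauto)) (proper' _ _ _ h23 h34 (by tauto))
      (alt v0 v1 v2 v3 v4 h01 h12 h23 h34 (by tauto))
  · intro v0 v1 v2 v3 hnd h01 h12 h23 h30
    simp only [List.nodup_cons, List.mem_cons, List.not_mem_nil, or_false, not_or] at hnd
    exact three_le_card_of_not_alternating (proper' _ _ _ h01 h12 (by tauto))
      (proper' _ _ _ h12 h23 (by tauto)) (proper' _ _ _ h23 h30 (by tauto))
      (alt v0 v1 v2 v3 v0 h01 h12 h23 h30 (by tauto))

/-- In a star edge coloring no walk of length four without backtracking is bi-colored. -/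
theorem IsStarEdgeColoring.not_alternating {V : Type*} {G : SimpleGraph V} {n : ℕ}
    {c : Sym2 V → ℕ} (hc : IsStarEdgeColoring G n c) {v0 v1 v2 v3 v4 : V} (h01 : G.Adj v0 v1)
    (h12 : G.Adj v1 v2) (h23 : G.Adj v2 v3) (h34 : G.Adj v3 v4) (h02 : v0 ≠ v2) (h13 : v1 ≠ v3)
    (h24 : v2 ≠ v4) : ¬ (c s(v0, v1) = c s(v2, v3) ∧ c s(v1, v2) = c s(v3, v4)) := by
  rintro ⟨h1, h2⟩
  obtain ⟨-, proper, path, cycle⟩ := hc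
  have h03 : v0 ≠ v3 := by
    rintro rfl
    exact proper v0 v1 v2 h01 h23.symm h12.ne (by rw [h1, Sym2.eq_swap])
  have h14 : v1 ≠ v4 := by
    rintro rfl
    exact proper v1 v2 v3 h12 h34.symm h23.ne (by rw [h2, Sym2.eq_swap])
  have two : ({c s(v0, v1), c s(v1, v2), c s(v2, v3), c s(v3, v4)} : Finset ℕ).card ≤ 2 := by
    rw [← h1, ← h2]
    refine (Finset.card_le_card (t := {c s(v0, v1), c s(v1, v2)}) ?_).trans Finset.card_le_two
    intro x; simp only [Finset.mem_insert, Finset.mem_singleton]; tauto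
  have := h01.ne
  have := h12.ne
  have := h23.ne
  have := h34.ne
  by_cases h04 : v0 = v4
  · subst h04
    have := cycle v0 v1 v2 v3 (by simp; tauto) h01 h12 h23 h34
    omega
  · have := path v0 v1 v2 v3 v4 (by simp; tauto) h01 h12 h23 h34
    omega

/-- The star condition holds at each vertex `w` of degree three whose neighbors have degree
three. -/
theorem IsStarEdgeColoring.starAt {V : Type*} {G : SimpleGraph V} {n : ℕ} {c : Sym2 V → ℕ}
    (hc : IsStarEdgeColoring G n c) (w : V) (x : Fin 3 → V) (y : Fin 3 → Fin 3 → V)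
    (hx : Function.Injective x) (hwx : ∀ i, G.Adj w (x i)) (hxy : ∀ i j, G.Adj (x i) (y i j)) :
    StarAt (fun i => c s(w, x i)) fun i j => c s(x i, y i j) := by
  rintro i j hij ⟨⟨m, hm⟩, m', hm'⟩
  dsimp only at hm hm'
  have hne : x i ≠ x j := fun h => hij (hx h)
  have hm0 : y i m ≠ w := by
    intro h
    refine hc.2.1 w (x i) (x j) (hwx i) (hwx j) hne ?_
    rw [← hm, h, Sym2.eq_swap]
  have hm0' : y j m' ≠ w := by
    intro h
    refine hc.2.1 w (x i) (x j) (hwx i) (hwx j) hne ?_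
    rw [← hm', h, Sym2.eq_swap]
  refine hc.not_alternating (hxy i m).symm (hwx i).symm (hwx j) (hxy j m') hm0 hne hm0'.symm
    ⟨?_, ?_⟩
  · rw [← hm, Sym2.eq_swap]
  · rw [hm', Sym2.eq_swap]

theorem StarAt.of_comp {α β : Type*} (f : α → β) {own : Fin 3 → α} {pal : Fin 3 → Fin 3 → α}
    (h : StarAt (fun i => f (own i)) fun i j => f (pal i j)) : StarAt own pal :=
  fun i j hij ⟨⟨m, hm⟩, m', hm'⟩ => h i j hij ⟨⟨m, congrArg f hm⟩, m', congrArg f hm'⟩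

/-- The constraint at the vertex of a triangle whose edges in the triangle have colors `a`, `b`
and whose pendant edge has color `d`, when the third edge of the triangle has color `e` and the
pendant edges at the ends of `a` and `b` have colors `d₁` and `d₂`. -/
def TriangleStarAt (a b d e d₁ d₂ : Fin 4) : Prop :=
  ∃ q r, q ≠ d ∧ r ≠ d ∧ q ≠ r ∧ StarAt ![a, b, d] ![![a, e, d₁], ![b, e, d₂], ![d, q, r]]

instance (a b d e d₁ d₂ : Fin 4) : Decidable (TriangleStarAt a b d e d₁ d₂) := by
  unfold TriangleStarAt; infer_instance

set_option maxRecDepth 100000 in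
theorem not_triangleStarAt : ∀ a b : Fin 4, a ≠ b → ∀ e, e ≠ a → e ≠ b →
    ∀ d₁, d₁ ≠ a → d₁ ≠ b → ∀ d₂, d₂ ≠ a → d₂ ≠ e → ∀ d₃, d₃ ≠ b → d₃ ≠ e →
    TriangleStarAt a b d₁ e d₂ d₃ → TriangleStarAt a e d₂ b d₁ d₃ →
    ¬ TriangleStarAt b e d₃ a d₁ d₂ := by
  decide

theorem IsStarEdgeColoring.triangleStarAt {V : Type*} {G : SimpleGraph V} {c : Sym2 V → ℕ}
    (hc : IsStarEdgeColoring G 4 c) {F : Sym2 V → Fin 4} (hF : ∀ e ∈ G.edgeSet, (F e : ℕ) = c e)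
    {w x₁ x₂ p y₁ y₂ q r : V} (hx₁ : G.Adj w x₁) (hx₂ : G.Adj w x₂) (hx : G.Adj x₁ x₂)
    (hp : G.Adj w p) (hy₁ : G.Adj x₁ y₁) (hy₂ : G.Adj x₂ y₂) (hq : G.Adj p q) (hr : G.Adj p r)
    (hpx₁ : x₁ ≠ p) (hpx₂ : x₂ ≠ p) (hqw : q ≠ w) (hrw : r ≠ w) (hqr : q ≠ r) :
    TriangleStarAt (F s(w, x₁)) (F s(w, x₂)) (F s(w, p)) (F s(x₁, x₂)) (F s(x₁, y₁))
      (F s(x₂, y₂)) := by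
  have proper : ∀ a b b' : V, G.Adj a b → G.Adj a b' → b ≠ b' → F s(a, b) ≠ F s(a, b') := by
    intro a b b' hb hb' hne h
    exact hc.2.1 a b b' hb hb' hne (by rw [← hF _ hb, ← hF _ hb', h])
  refine ⟨F s(p, q), F s(p, r), ?_, ?_, proper _ _ _ hq hr hqr, StarAt.of_comp Fin.val ?_⟩
  · rw [Sym2.eq_swap (a := w)]
    exact proper _ _ _ hq hp.symm hqw
  · rw [Sym2.eq_swap (a := w)]
    exact proper _ _ _ hr hp.symm hrw
  · have key := hc.starAt w ![x₁, x₂, p] ![![w, x₂, y₁], ![w, x₁, y₂], ![w, q, r]]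
      (by
        intro i j
        have := hx.ne
        fin_cases i <;> fin_cases j <;> simp_all [eq_comm])
      (by simp [Fin.forall_fin_succ, *])
      (by simp [Fin.forall_fin_succ, *, hx₁.symm, hx₂.symm, hp.symm, hx.symm])
    convert key using 1
    · funext i
      fin_cases i
      exacts [hF _ hx₁, hF _ hx₂, hF _ hp]
    · funext i j
      fin_cases i <;> fin_cases j
      · exact (hF _ hx₁).trans (by rw [Sym2.eq_swap]; rfl)
      · exact hF _ hx
      · exact hF _ hy₁
      · exact (hF _ hx₂).trans (by rw [Sym2.eq_swap]; rfl)
      · exact (hF _ hx).trans (by rw [Sym2.eq_swap]; rfl)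
      · exact hF _ hy₂
      · exact (hF _ hp).trans (by rw [Sym2.eq_swap]; rfl)
      · exact hF _ hq
      · exact hF _ hr

/-- A graph containing a triangle all of whose vertices, and the neighbors of these outside the
triangle, have degree at least three has no star 4-edge coloring. -/
theorem not_isStarEdgeColoring_four_of_triangle {V : Type*} {G : SimpleGraph V}
    {w₁ w₂ w₃ p₁ p₂ p₃ q₁ q₂ q₃ r₁ r₂ r₃ : V}
    (h₁₂ : G.Adj w₁ w₂) (h₁₃ : G.Adj w₁ w₃) (h₂₃ : G.Adj w₂ w₃)
    (hp₁ : G.Adj w₁ p₁) (hp₂ : G.Adj w₂ p₂) (hp₃ : G.Adj w₃ p₃)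
    (hq₁ : G.Adj p₁ q₁) (hq₂ : G.Adj p₂ q₂) (hq₃ : G.Adj p₃ q₃)
    (hr₁ : G.Adj p₁ r₁) (hr₂ : G.Adj p₂ r₂) (hr₃ : G.Adj p₃ r₃)
    (hw₁ : [w₂, w₃, p₁].Nodup) (hw₂ : [w₁, w₃, p₂].Nodup) (hw₃ : [w₁, w₂, p₃].Nodup)
    (hn₁ : [w₁, q₁, r₁].Nodup) (hn₂ : [w₂, q₂, r₂].Nodup) (hn₃ : [w₃, q₃, r₃].Nodup)
    (c : Sym2 V → ℕ) : ¬ IsStarEdgeColoring G 4 c := by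
  intro hc
  simp only [List.nodup_cons, List.mem_cons, List.not_mem_nil, or_false, not_or, not_false_eq_true,
    List.nodup_nil, and_true] at hw₁ hw₂ hw₃ hn₁ hn₂ hn₃
  let F : Sym2 V → Fin 4 := fun e => Fin.ofNat 4 (c e)
  have hF : ∀ e ∈ G.edgeSet, (F e : ℕ) = c e := fun e he => Nat.mod_eq_of_lt (hc.1 e he)
  have proper : ∀ a b b' : V, G.Adj a b → G.Adj a b' → b ≠ b' → F s(a, b) ≠ F s(a, b') := by
    intro a b b' hb hb' hne h
    exact hc.2.1 a b b' hb hb' hne (by rw [← hF _ hb, ← hF _ hb', h])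
  have t₁ := hc.triangleStarAt hF h₁₂ h₁₃ h₂₃ hp₁ hp₂ hp₃ hq₁ hr₁ hw₁.1.2 hw₁.2
    (Ne.symm hn₁.1.1) (Ne.symm hn₁.1.2) hn₁.2
  have t₂ := hc.triangleStarAt hF h₁₂.symm h₂₃ h₁₃ hp₂ hp₁ hp₃ hq₂ hr₂ hw₂.1.2 hw₂.2
    (Ne.symm hn₂.1.1) (Ne.symm hn₂.1.2) hn₂.2
  have t₃ := hc.triangleStarAt hF h₁₃.symm h₂₃.symm h₁₂ hp₃ hp₁ hp₂ hq₃ hr₃ hw₃.1.2 hw₃.2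
    (Ne.symm hn₃.1.1) (Ne.symm hn₃.1.2) hn₃.2
  have n₁ := proper _ _ _ h₁₂ h₁₃ hw₁.1.1
  have n₂ := proper _ _ _ h₂₃ h₁₂.symm (Ne.symm hw₂.1.1)
  have n₃ := proper _ _ _ h₂₃.symm h₁₃.symm (Ne.symm hw₃.1.1)
  have n₄ := proper _ _ _ hp₁ h₁₂ (Ne.symm hw₁.1.2)
  have n₅ := proper _ _ _ hp₁ h₁₃ (Ne.symm hw₁.2)
  have n₆ := proper _ _ _ hp₂ h₁₂.symm (Ne.symm hw₂.1.2)
  have n₇ := proper _ _ _ hp₂ h₂₃ (Ne.symm hw₂.2)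
  have n₈ := proper _ _ _ hp₃ h₁₃.symm (Ne.symm hw₃.1.2)
  have n₉ := proper _ _ _ hp₃ h₂₃.symm (Ne.symm hw₃.2)
  rw [Sym2.eq_swap (a := w₂) (b := w₁)] at n₂ n₆ t₂
  rw [Sym2.eq_swap (a := w₃) (b := w₁)] at n₃ n₈ t₃
  rw [Sym2.eq_swap (a := w₃) (b := w₂)] at n₃ n₉ t₃
  exact not_triangleStarAt _ _ n₁ _ n₂ n₃ _ n₄ n₅ _ n₆ n₇ _ n₈ n₉ t₁ t₂ t₃

theorem mem_zip_neckCycle_iff {h : ℕ} (hh : 3 ≤ h) (a b : ℕ) :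
    (a, b) ∈ (neckCycle h).zip ((neckCycle h).rotate 1) ↔
      a = 0 ∧ b = 2 ∨ 2 ≤ a ∧ a ≤ h ∧ b = a + 1 ∨ a = h + 1 ∧ b = 1 ∨ a = 1 ∧ b = 0 := by
  have hcyc : neckCycle h = 0 :: (List.range' 2 h ++ [1]) := by
    obtain ⟨m, rfl⟩ : ∃ m, h = m + 2 := ⟨h - 2, by omega⟩
    simp [neckCycle, List.range'_concat, Nat.add_comm, Nat.add_left_comm]
  have hget : ∀ i, ((0 :: (List.range' 2 h ++ [1]))[i]? = some a ↔
      i = 0 ∧ a = 0 ∨ 1 ≤ i ∧ i ≤ h ∧ a = i + 1 ∨ i = h + 1 ∧ a = 1) := by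
    intro i
    rcases i with _ | i
    · simp; omega
    · rcases lt_trichotomy i h with hi | rfl | hi
      · simp [List.getElem?_append, hi]; omega
      · simp
        omega
      · simp [List.getElem?_append, show ¬ i < h by omega, show i - h ≠ 0 by omega]; omega
  have hget' : ∀ i, ((List.range' 2 h ++ [1] ++ [0])[i]? = some b ↔
      i < h ∧ b = i + 2 ∨ i = h ∧ b = 1 ∨ i = h + 1 ∧ b = 0) := by
    intro i
    rcases lt_trichotomy i h with hi | rfl | hi
    · simp [List.getElem?_append, hi]; omega
    · simp; omega
    · obtain ⟨k, rfl⟩ : ∃ k, i = h + 1 + k := ⟨i - h - 1, by omega⟩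
      rcases k with _ | k
      · simp; omega
      · rw [List.getElem?_eq_none (by simp; omega)]
        simp; omega
  rw [hcyc, List.rotate_cons_succ, List.rotate_zero, List.mem_iff_getElem?]
  simp only [List.getElem?_zip_eq_some, hget, hget']
  constructor
  · rintro ⟨i, hi⟩
    omega
  · intro H
    by_cases h0 : a = 0
    · exact ⟨0, by omega⟩
    · by_cases h1 : a = 1
      · exact ⟨h + 1, by omega⟩
      · exact ⟨a - 1, by omega⟩

theorem not_isStarEdgeColoring_four_necklace {h : ℕ} (hh : 3 ≤ h) (c : Sym2 (NeckVert h) → ℕ) :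
    ¬ IsStarEdgeColoring (necklace h) 4 c := by
  refine not_isStarEdgeColoring_four_of_triangle (w₁ := .inr ⟨0, by omega⟩)
    (w₂ := .inr ⟨1, by omega⟩) (w₃ := .inl ⟨0, by omega⟩) (p₁ := .inr ⟨2, by omega⟩)
    (p₂ := .inr ⟨h + 1, by omega⟩) (p₃ := .inl ⟨1, by omega⟩) (q₁ := .inr ⟨3, by omega⟩)
    (q₂ := .inr ⟨h, by omega⟩) (q₃ := .inr ⟨2, by omega⟩) (r₁ := .inl ⟨1, by omega⟩)
    (r₂ := .inl ⟨h - 1, by omega⟩) (r₃ := .inl ⟨2, by omega⟩)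
    ?_ ?_ ?_ ?_ ?_ ?_ ?_ ?_ ?_ ?_ ?_ ?_ ?_ ?_ ?_ ?_ ?_ ?_ c
  all_goals
    simp [necklace, neckRel, mem_zip_neckCycle_iff hh]
    try omega

/-- The position of a vertex of the necklace, seen as a ladder with rungs at positions
`1, …, h` and end vertices `u_1` and `u_{h+1}` at positions `0` and `h + 1`. The spine is on the
side `true`, and the leaves are on the side `false`. -/
def neckPos (h : ℕ) : NeckVert h → ℕ × Bool
  | Sum.inl i => (i + 1, true)
  | Sum.inr j => (if j.val = 0 then 1 else if j.val = 1 then 0 else j, false)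

theorem neckPos_injective (h : ℕ) : Function.Injective (neckPos h) := by
  rintro (⟨i, hi⟩ | ⟨i, hi⟩) (⟨j, hj⟩ | ⟨j, hj⟩) hij <;> simp [neckPos] at hij ⊢
  · exact hij
  · grind

/-- The neighbors of a position in the ladder. -/
def ladderNb (h : ℕ) (w : ℕ × Bool) : Fin 3 → ℕ × Bool :=
  ![if w.1 = 0 then (h + 1, false) else if w.1 = h + 1 then (0, false) else (w.1, !w.2),
    if w.1 = 0 then (1, true) else if w.1 = h + 1 then (h, true) else
      (w.1 - 1, if w.1 = 1 then false else w.2),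
    if w.1 = 0 then (1, false) else if w.1 = h + 1 then (h, false) else
      (w.1 + 1, if w.1 = h then false else w.2)]

/-- The color of the edge on side `s` in a column of colors, consisting of the colors of an edge
on the side `true`, of a rung and of an edge on the side `false`. -/
def sideColor (s : Bool) (x : ℕ × ℕ × ℕ) : ℕ := if s then x.1 else x.2.2

/-- The colors of the edges at a position of the ladder. The column `f p` gives the colors of the
rung at `p` and of the edges from `p` to `p + 1`; the edge between the ends has color `1`. -/
def ladderCol (h : ℕ) (f : ℕ → ℕ × ℕ × ℕ) (w : ℕ × Bool) : Fin 3 → ℕ :=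
  ![if w.1 = 0 ∨ w.1 = h + 1 then 1 else (f w.1).2.1,
    if w.1 = 0 then (f 0).1 else if w.1 = h + 1 then (f h).1 else sideColor w.2 (f (w.1 - 1)),
    if w.1 = 0 then (f 0).2.2 else if w.1 = h + 1 then (f h).2.2 else sideColor w.2 (f w.1)]

/-- The color of the edge between two adjacent positions of the ladder. -/
def ladderEdgeColor (f : ℕ → ℕ × ℕ × ℕ) (w w' : ℕ × Bool) : ℕ :=
  if w.1 = w'.1 then (f w.1).2.1
  else if w.1 + 1 = w'.1 ∨ w'.1 + 1 = w.1 then sideColor (w.2 || w'.2) (f (min w.1 w'.1))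
  else 1

theorem ladderEdgeColor_comm (f : ℕ → ℕ × ℕ × ℕ) (w w' : ℕ × Bool) :
    ladderEdgeColor f w w' = ladderEdgeColor f w' w := by
  unfold ladderEdgeColor
  rw [Bool.or_comm, min_comm]
  split_ifs <;> grind

/-- The adjacency relation of the ladder. -/
def LadderAdj (h : ℕ) (w w' : ℕ × Bool) : Prop :=
  w.1 = w'.1 ∧ w.2 ≠ w'.2 ∧ 1 ≤ w.1 ∧ w.1 ≤ h ∨
  (w.1 + 1 = w'.1 ∧ w'.1 ≤ h + 1 ∨ w'.1 + 1 = w.1 ∧ w.1 ≤ h + 1) ∧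
    (w.1 = 0 ∨ w.1 = h + 1 → w.2 = false) ∧ (w'.1 = 0 ∨ w'.1 = h + 1 → w'.2 = false) ∧
    (w.2 = w'.2 ∨ w.1 = 0 ∨ w.1 = h + 1 ∨ w'.1 = 0 ∨ w'.1 = h + 1) ∨
  w.2 = false ∧ w'.2 = false ∧ (w.1 = 0 ∧ w'.1 = h + 1 ∨ w'.1 = 0 ∧ w.1 = h + 1)

theorem LadderAdj.symm {h : ℕ} {w w' : ℕ × Bool} (hw : LadderAdj h w w') : LadderAdj h w' w := by
  obtain ⟨p, s⟩ := w
  obtain ⟨q, t⟩ := w'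
  rcases s <;> rcases t <;> simp [LadderAdj] at hw ⊢ <;> omega

theorem ladderAdj_of_adj {h : ℕ} (hh : 3 ≤ h) {u v : NeckVert h} (huv : (necklace h).Adj u v) :
    LadderAdj h (neckPos h u) (neckPos h v) := by
  have key : ∀ u v, neckRel h u v → LadderAdj h (neckPos h u) (neckPos h v) := by
    rintro (⟨i, hi⟩ | ⟨i, hi⟩) (⟨j, hj⟩ | ⟨j, hj⟩) huv
    · simp only [neckRel] at huv
      simp [LadderAdj, neckPos]
      omega
    · simp only [neckRel] at huv
      simp [LadderAdj, neckPos]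
      split_ifs <;> omega
    · exact huv.elim
    · simp only [neckRel, mem_zip_neckCycle_iff hh] at huv
      simp [LadderAdj, neckPos]
      split_ifs <;> omega
  exact huv.2.elim (key u v) fun h' => (key v u h').symm

theorem exists_ladderNb_of_ladderAdj {h : ℕ} (hh : 3 ≤ h) (f : ℕ → ℕ × ℕ × ℕ) {w w' : ℕ × Bool}
    (hw : LadderAdj h w w') :
    ∃ i, ladderNb h w i = w' ∧ ladderEdgeColor f w w' = ladderCol h f w i := by
  obtain ⟨p, s⟩ := w
  obtain ⟨q, t⟩ := w'
  simp only [LadderAdj] at hw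
  rcases hw with ⟨rfl, hst, h1, h2⟩ | ⟨⟨rfl, hq⟩ | ⟨rfl, hp⟩, hs, ht, hst⟩ |
    ⟨rfl, rfl, ⟨rfl, rfl⟩ | ⟨rfl, rfl⟩⟩
  · have : p ≠ 0 ∧ p ≠ h + 1 := by omega
    exact ⟨0, by rcases s <;> rcases t <;> simp_all [ladderNb, ladderCol, ladderEdgeColor]⟩
  · by_cases hp : p = 0 ∧ t = true
    · exact ⟨1, by simp_all [ladderNb, ladderCol, ladderEdgeColor, sideColor]⟩
    · have : p ≠ h + 1 := by omega
      refine ⟨2, ?_⟩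
      simp [ladderNb, ladderCol, ladderEdgeColor, sideColor]
      rcases s <;> rcases t <;> grind
  · by_cases hq : q = h ∧ t = false
    · refine ⟨2, ?_⟩
      simp [ladderNb, ladderCol, ladderEdgeColor, sideColor]
      rcases s <;> grind
    · refine ⟨1, ?_⟩
      simp [ladderNb, ladderCol, ladderEdgeColor, sideColor]
      rcases s <;> rcases t <;> grind
  · exact ⟨0, by simp [ladderNb, ladderCol, ladderEdgeColor]; omega⟩
  · exact ⟨0, by simp [ladderNb, ladderCol, ladderEdgeColor]; omega⟩

theorem exists_isStarEdgeColoring_necklace {h : ℕ} (hh : 3 ≤ h) (f : ℕ → ℕ × ℕ × ℕ)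
    (hf : ∀ w : ℕ × Bool, w.1 ≤ h + 1 → (∀ i, ladderCol h f w i < 5) ∧
      Function.Injective (ladderCol h f w) ∧
      StarAt (ladderCol h f w) fun i => ladderCol h f (ladderNb h w i)) :
    ∃ c, IsStarEdgeColoring (necklace h) 5 c := by
  have hle : ∀ u, (neckPos h u).1 ≤ h + 1 := by
    rintro (⟨i, hi⟩ | ⟨i, hi⟩) <;> simp [neckPos] <;> grind
  refine ⟨Sym2.lift ⟨fun u v => ladderEdgeColor f (neckPos h u) (neckPos h v),
      fun _ _ => ladderEdgeColor_comm f _ _⟩,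
    isStarEdgeColoring_of_starAt (neckPos h) (neckPos_injective h) (ladderNb h) (ladderCol h f)
      (fun u v huv => ?_) (fun u => (hf _ (hle u)).1) (fun u => (hf _ (hle u)).2.1)
      fun u => (hf _ (hle u)).2.2⟩
  exact exists_ladderNb_of_ladderAdj hh f (ladderAdj_of_adj hh huv)

/-- The columns of colors used for the necklaces. -/
def stateColumn : Fin 14 → ℕ × ℕ × ℕ :=
  ![(0, 1, 0), (2, 3, 2), (0, 1, 4), (4, 3, 2), (2, 0, 3), (4, 1, 0), (3, 0, 2), (3, 0, 2),
    (2, 4, 0), (2, 0, 3), (0, 4, 2), (2, 0, 3), (3, 4, 0), (0, 1, 4)]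

/-- The successor of a column. -/
def stateNext : Fin 14 → Fin 14 := ![1, 2, 3, 0, 5, 1, 2, 8, 2, 10, 5, 12, 13, 1]

theorem exists_start {h : ℕ} (hh : 3 ≤ h) : ∃ s : Fin 14, s ∈ [4, 6, 7, 9, 11] ∧
    stateNext^[h - 2] s ∈ [0, 5, 13] ∧ stateNext^[h] s = 2 ∧
    ∀ q, q + 3 ≤ h → stateNext^[q] s ≠ 13 := by
  by_cases h4 : h = 4
  · subst h4
    refine ⟨11, by decide, by decide, by decide, fun q hq => ?_⟩
    have : q ≤ 1 := by omega
    interval_cases q <;> decide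
  have key : ∃ s : Fin 14, s ∈ [4, 6, 7, 9] ∧
      stateNext^[h - 2] s ∈ [0, 5] ∧ stateNext^[h] s = 2 := by
    induction h using Nat.strong_induction_on with
    | _ h ih =>
      by_cases hs' : h ≤ 6 ∨ h = 8
      · have : h = 3 ∨ h = 5 ∨ h = 6 ∨ h = 8 := by omega
        rcases this with rfl | rfl | rfl | rfl <;> decide
      · obtain ⟨s, hs, -, h2⟩ := ih (h - 4) (by omega) (by omega) (by omega)
        obtain ⟨k, rfl⟩ : ∃ k, h = k + 4 := ⟨h - 4, by omega⟩
        rw [Nat.add_sub_cancel] at h2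
        refine ⟨s, hs, ?_, ?_⟩
        · rw [show k + 4 - 2 = 2 + k by omega, Function.iterate_add_apply, h2]
          decide
        · rw [Nat.add_comm k, Function.iterate_add_apply, h2]
          decide
  obtain ⟨s, hs, h1, h2⟩ := key
  have hlt : ∀ q, stateNext^[q] s < 11 := by
    intro q
    induction q with
    | zero => exact (by decide : ∀ s : Fin 14, s ∈ [4, 6, 7, 9] → s < 11) s hs
    | succ q ih =>
      rw [Function.iterate_succ_apply']
      exact (by decide : ∀ t : Fin 14, t < 11 → stateNext t < 11) _ ih
  exact ⟨s, by grind, by grind, h2, fun q _ hq => absurd (hlt q) (by rw [hq]; decide)⟩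

/-- The star condition at a vertex of the ladder away from the ends, in terms of the columns around
it. -/
theorem starAt_stateColumn : ∀ t : Fin 14, t ≠ 13 → ∀ s : Bool,
    let x := stateColumn t
    let y := stateColumn (stateNext t)
    let z := stateColumn (stateNext (stateNext t))
    let w := stateColumn (stateNext (stateNext (stateNext t)))
    StarAt ![z.2.1, sideColor s y, sideColor s z]
      ![![z.2.1, sideColor (!s) y, sideColor (!s) z], ![y.2.1, sideColor s x, sideColor s y],
        ![w.2.1, sideColor s z, sideColor s w]] := by
  decide

theorem starAt_start : ∀ t : Fin 14, t ∈ [4, 6, 7, 9, 11] → ∀ s : Bool,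
    let x := stateColumn t
    let y := stateColumn (stateNext t)
    let z := stateColumn (stateNext (stateNext t))
    StarAt ![y.2.1, sideColor s x, sideColor s y]
      ![![y.2.1, sideColor (!s) x, sideColor (!s) y], ![1, x.1, x.2.2],
        ![z.2.1, sideColor s y, sideColor s z]] := by
  decide

theorem starAt_end : ∀ t : Fin 14, t ∈ [0, 5, 13] → ∀ s : Bool,
    let x := stateColumn t
    let y := stateColumn (stateNext t)
    let z := stateColumn 2
    StarAt ![z.2.1, sideColor s y, sideColor s z]
      ![![z.2.1, sideColor (!s) y, sideColor (!s) z], ![y.2.1, sideColor s x, sideColor s y],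
        ![1, z.1, z.2.2]] := by
  decide

theorem stateColumn_lt_and_injective : ∀ (t : Fin 14) (s : Bool),
    let x := stateColumn t
    let y := stateColumn (stateNext t)
    (∀ i, ![y.2.1, sideColor s x, sideColor s y] i < 5) ∧
      Function.Injective ![y.2.1, sideColor s x, sideColor s y] := by
  decide

theorem ladderCol_starAt_of_start : ∀ t : Fin 14, t ∈ [4, 6, 7, 9, 11] →
    let x := stateColumn t
    let y := stateColumn (stateNext t)
    let z := stateColumn 2
    ((∀ i, ![1, x.1, x.2.2] i < 5) ∧ Function.Injective ![1, x.1, x.2.2] ∧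
      StarAt ![1, x.1, x.2.2] ![![1, z.1, z.2.2], ![y.2.1, x.1, y.1], ![y.2.1, x.2.2, y.2.2]]) := by
  decide

theorem ladderCol_starAt_of_end : ∀ t : Fin 14, t ∈ [4, 6, 7, 9, 11] →
    ∀ r : Fin 14, r ∈ [0, 5, 13] →
    let x := stateColumn t
    let y := stateColumn (stateNext r)
    let z := stateColumn 2
    ((∀ i, ![1, z.1, z.2.2] i < 5) ∧ Function.Injective ![1, z.1, z.2.2] ∧
      StarAt ![1, z.1, z.2.2] ![![1, x.1, x.2.2], ![z.2.1, y.1, z.1], ![z.2.1, y.2.2, z.2.2]]) := by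
  decide

theorem exists_isStarEdgeColoring_five_necklace {h : ℕ} (hh : 3 ≤ h) :
    ∃ c, IsStarEdgeColoring (necklace h) 5 c := by
  obtain ⟨t, ht, hend, h2, h13⟩ := exists_start hh
  obtain ⟨m, rfl⟩ : ∃ m, h = m + 3 := ⟨h - 3, by omega⟩
  rw [show m + 3 - 2 = m + 1 by omega] at hend
  have hm2 : stateNext^[m + 2] t = stateNext (stateNext^[m + 1] t) :=
    Function.iterate_succ_apply' ..
  refine exists_isStarEdgeColoring_necklace hh (fun p => stateColumn (stateNext^[p] t)) ?_
  rintro ⟨p, s⟩ hp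
  have hp' : p = 0 ∨ p = m + 4 ∨ p = 1 ∨ p = m + 3 ∨ ∃ q, p = q + 2 ∧ q ≤ m := by
    by_cases h0 : 2 ≤ p ∧ p ≤ m + 2
    · exact .inr (.inr (.inr (.inr ⟨p - 2, by omega⟩)))
    · simp only at hp; omega
  rcases hp' with rfl | rfl | rfl | rfl | ⟨q, rfl, hq⟩
  · convert ladderCol_starAt_of_start t ht using 3 <;>
      simp [ladderCol, ladderNb, sideColor, Fin.forall_fin_succ, h2, funext_iff]
  · convert ladderCol_starAt_of_end t ht _ hend using 3 <;>
      simp [ladderCol, ladderNb, sideColor, Fin.forall_fin_succ, h2, hm2, funext_iff]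
  · refine and_assoc.1 ⟨?_, ?_⟩
    · convert stateColumn_lt_and_injective t s using 3 <;>
        simp [ladderCol, sideColor]
    · convert starAt_start t ht s using 1 <;>
        simp [ladderCol, ladderNb, sideColor, Fin.forall_fin_succ, funext_iff]
  · refine and_assoc.1 ⟨?_, ?_⟩
    · convert stateColumn_lt_and_injective (stateNext^[m + 2] t) s using 3 <;>
        simp [ladderCol, ← Function.iterate_succ_apply']
    · convert starAt_end _ hend s using 1 <;>
        simp [ladderCol, ladderNb, Fin.forall_fin_succ, funext_iff, h2, hm2]
  · have hq1 : stateNext^[q + 1] t = stateNext (stateNext^[q] t) :=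
      Function.iterate_succ_apply' ..
    have hq2 : stateNext^[q + 2] t = stateNext (stateNext^[q + 1] t) :=
      Function.iterate_succ_apply' ..
    have hq3 : stateNext^[q + 3] t = stateNext (stateNext^[q + 2] t) :=
      Function.iterate_succ_apply' ..
    have hqm : q ≠ m + 1 ∧ q ≠ m + 2 ∧ q ≠ m + 3 := by omega
    refine and_assoc.1 ⟨?_, ?_⟩
    · convert stateColumn_lt_and_injective (stateNext^[q + 1] t) s using 3 <;>
        simp [ladderCol, hqm, hq2]
    · convert starAt_stateColumn _ (h13 q (by omega)) s using 1 <;>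
        simp [ladderCol, ladderNb, Fin.forall_fin_succ, funext_iff, hqm, hq1, hq2, hq3]

/-- For every `h ≥ 3`, the necklace `Ne_h` has star chromatic index exactly 5:
it admits a star 5-edge coloring but no star 4-edge coloring. -/
theorem starChromaticIndex_necklace (h : ℕ) (hh : 3 ≤ h) :
    (∃ c : Sym2 (NeckVert h) → ℕ, IsStarEdgeColoring (necklace h) 5 c) ∧
    ¬ ∃ c : Sym2 (NeckVert h) → ℕ, IsStarEdgeColoring (necklace h) 4 c := by
  exact ⟨exists_isStarEdgeColoring_five_necklace hh,
    fun ⟨c, hc⟩ => not_isStarEdgeColoring_four_necklace hh c hc⟩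
end
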